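/- arXiv:2509.12986 — 3 statements merged into one kernel-verified Lean document; each statement's English description precedes it below -/
import Mathlib

section
/- (Main theorem: existence of quantum tamper detection codes against CPTP adversaries.) Let α, δ, γ be real constants with 0 ≤ 2α < δ < 1 and γ·(δ/2 − α) > 2. Then there exists k₀ ∈ ℕ such that for every integer k ≥ k₀ for which n := γ·k is an integer, setting d := 2^n, the following holds: for every finite family F of CPTP maps on M_d(ℂ), each Φ ∈ F given with a Kraus representation having at most d^{1−δ} Kraus operators, such that |F| ≤ 2^{d^α} and F_e(Φ) ≤ 2·d^{−δ/2} for every Φ ∈ F, there exists a unitary U ∈ U(d) such that for every s ∈ {0,1}^k and every Φ ∈ F, ∑_{t∈{0,1}^k} ⟨ψ_t, Φ(|ψ_s⟩⟨ψ_s|) ψ_t⟩ ≤ 2^{−k}, where ψ_m := U(e_m ⊗ e_0). In other words, the Haar-random scheme with this U is 2^{−k}-tamper secure against F. -/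
open Matrix

noncomputable section

/-- The index set of `ℂ^d ≅ ℂ^{2^k} ⊗ ℂ^{2^{n-k}}`, `d = 2^n`. -/
abbrev CodeIdx (k m : ℕ) := Fin (2 ^ k) × Fin (2 ^ m)

/-- The first standard basis index of the ancilla register `ℂ^{2^m}`. -/
def anc0 (m : ℕ) : Fin (2 ^ m) := ⟨0, Nat.two_pow_pos m⟩

/-!
The codewords are chosen greedily. Given the ones chosen so far, the next is a normalized random
signed sum of an orthonormal basis of their orthogonal complement, which has at least half of the
total dimension. Each transition amplitude between the new codeword and itself is a Rademacher chaos
of order two, whose mean is a compressed trace and hence small by the fidelity bound; the transition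
probabilities to and from the old codewords are chaoses with positive semidefinite coefficients,
whose mean is small by the bound on the number of Kraus operators. The exponential moment bound for
such chaoses makes all of them concentrate simultaneously over the whole family, so some choice of
signs works.
-/

section RademacherChaos

open Finset
open scoped BigOperators Matrix.Norms.Frobenius

variable {m n : Type*}

/-- The vector with entries `±1` in the ring `R` given by a sign pattern `ε`. Rademacher variables
are modelled by averaging over all `ε : n → ℤˣ`. -/
def signVec (R : Type*) [Ring R] (ε : n → ℤˣ) : n → R := fun x => ((ε x : ℤ) : R)

lemma signVec_mul_self {R : Type*} [Ring R] (ε : n → ℤˣ) (x : n) :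
    signVec R ε x * signVec R ε x = 1 := by
  rw [signVec, ← Int.cast_mul, ← Units.val_mul, Int.units_mul_self]
  simp

variable [Fintype m] [Fintype n]

lemma frobenius_norm_sq {𝕜 : Type*} [NormedAddCommGroup 𝕜] (A : Matrix m n 𝕜) :
    ‖A‖ ^ 2 = ∑ i, ∑ j, ‖A i j‖ ^ 2 := by
  rw [frobenius_norm_def, ← Real.sqrt_eq_rpow, Real.sq_sqrt (by positivity)]
  simp only [Real.rpow_two]

lemma frobenius_norm_submatrix_equiv {m' n' 𝕜 : Type*} [Fintype m'] [Fintype n']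
    [NormedAddCommGroup 𝕜] (A : Matrix m n 𝕜) (e : m' ≃ m) (f : n' ≃ n) :
    ‖A.submatrix e f‖ = ‖A‖ := by
  rw [← sq_eq_sq₀ (norm_nonneg _) (norm_nonneg _), frobenius_norm_sq, frobenius_norm_sq,
    ← e.sum_comp]
  exact sum_congr rfl fun x _ => f.sum_comp fun y => ‖A (e x) y‖ ^ 2

lemma frobenius_norm_vecMulVec_self (v : n → ℝ) : ‖vecMulVec v v‖ = v ⬝ᵥ v := by
  have hv : 0 ≤ v ⬝ᵥ v := sum_nonneg fun x _ => mul_self_nonneg (v x)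
  rw [← sq_eq_sq₀ (norm_nonneg _) hv, frobenius_norm_sq, dotProduct, sq, sum_mul_sum]
  refine sum_congr rfl fun x _ => sum_congr rfl fun y _ => ?_
  rw [vecMulVec_apply, Real.norm_eq_abs, sq_abs]
  ring

lemma frobenius_norm_map_re_le (M : Matrix m n ℂ) : ‖M.map Complex.re‖ ≤ ‖M‖ := by
  rw [← sq_le_sq₀ (norm_nonneg _) (norm_nonneg _), frobenius_norm_sq, frobenius_norm_sq]
  gcongr
  exact Complex.abs_re_le_norm _

/-- The Rademacher chaos of order two with coefficient matrix `M`: the value of the quadratic form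
of `M` at the sign vector of `ε`. -/
def rademacherChaos {R : Type*} [Ring R] (M : Matrix n n R) (ε : n → ℤˣ) : R :=
  signVec R ε ⬝ᵥ M *ᵥ signVec R ε

lemma rademacherChaos_eq_sum {R : Type*} [CommRing R] (M : Matrix n n R) (ε : n → ℤˣ) :
    rademacherChaos M ε = ∑ x, ∑ y, M x y * (signVec R ε x * signVec R ε y) := by
  simp only [rademacherChaos, dotProduct, mulVec, mul_sum]
  exact sum_congr rfl fun x _ => sum_congr rfl fun y _ => by ring

lemma rademacherChaos_smul {R : Type*} [CommRing R] (c : R) (M : Matrix n n R) (ε : n → ℤˣ) :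
    rademacherChaos (c • M) ε = c * rademacherChaos M ε := by
  rw [rademacherChaos, smul_mulVec, dotProduct_smul, smul_eq_mul, rademacherChaos]

lemma re_rademacherChaos (M : Matrix n n ℂ) (ε : n → ℤˣ) :
    (rademacherChaos M ε).re = rademacherChaos (M.map Complex.re) ε := by
  simp [rademacherChaos_eq_sum, signVec, ← Int.cast_mul]

lemma rademacherChaos_conjTranspose_mul_self (W : Matrix m n ℂ) (ε : n → ℤˣ) :
    rademacherChaos (Wᴴ * W) ε = ((∑ i, ‖(W *ᵥ signVec ℂ ε) i‖ ^ 2 : ℝ) : ℂ) := by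
  have hstar : star (signVec ℂ ε) = signVec ℂ ε := by
    ext x
    simp [signVec]
  calc rademacherChaos (Wᴴ * W) ε = star (W *ᵥ signVec ℂ ε) ⬝ᵥ (W *ᵥ signVec ℂ ε) := by
        rw [rademacherChaos, ← mulVec_mulVec, dotProduct_mulVec, star_mulVec, hstar]
    _ = _ := by
        rw [dotProduct, Complex.ofReal_sum]
        exact sum_congr rfl fun i _ => by
          rw [Pi.star_apply, ← starRingEnd_apply, Complex.conj_mul', Complex.ofReal_pow]

lemma rademacherChaos_vecMulVec_self {R : Type*} [CommRing R] (v : n → R) (ε : n → ℤˣ) :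
    rademacherChaos (vecMulVec v v) ε = (v ⬝ᵥ signVec R ε) ^ 2 := by
  rw [rademacherChaos_eq_sum, dotProduct, sq, sum_mul_sum]
  exact sum_congr rfl fun x _ => sum_congr rfl fun y _ => by rw [vecMulVec_apply]; ring

lemma rademacherChaos_add {R : Type*} [Ring R] (M N : Matrix n n R) (ε : n → ℤˣ) :
    rademacherChaos (M + N) ε = rademacherChaos M ε + rademacherChaos N ε := by
  rw [rademacherChaos, add_mulVec, dotProduct_add, rademacherChaos, rademacherChaos]

lemma rademacherChaos_option (A : Matrix (Option n) (Option n) ℝ) (b : ℤˣ) (ε : n → ℤˣ) :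
    rademacherChaos A (fun x => x.elim b ε) =
      A none none + rademacherChaos (A.submatrix some some) ε +
        ((b : ℤ) : ℝ) * ((fun x => A none (some x) + A (some x) none) ⬝ᵥ signVec ℝ ε) := by
  have hb : ((b : ℤ) : ℝ) * ((b : ℤ) : ℝ) = 1 := signVec_mul_self (n := Unit) (fun _ => b) ()
  simp only [rademacherChaos_eq_sum, signVec, Fintype.sum_option, Option.elim_none,
    Option.elim_some, submatrix_apply, dotProduct, mul_sum, sum_add_distrib, add_mul, mul_add,
    mul_left_comm _ ((b : ℤ) : ℝ), mul_comm _ ((b : ℤ) : ℝ)]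
  linear_combination A none none * hb

lemma expect_signs_option [DecidableEq n] (f : (Option n → ℤˣ) → ℝ) :
    𝔼 ε, f ε = 𝔼 ε : n → ℤˣ, (f (fun x => x.elim 1 ε) + f (fun x => x.elim (-1) ε)) / 2 := by
  have hpair (g : ℤˣ → ℝ) : 𝔼 b, g b = (g 1 + g (-1)) / 2 := by
    rw [Fintype.expect_eq_sum_div_card, UnitsInt.univ]
    simp
  rw [← Fintype.expect_equiv (Equiv.piOptionEquivProd (β := fun _ : Option n => ℤˣ)).symm
    (fun p => f (fun x => x.elim p.1 p.2)) f (fun p => congrArg f ?_), ← univ_product_univ,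
    expect_product, expect_comm]
  · exact expect_congr rfl fun ε _ => hpair _
  · ext x
    cases x <;> rfl

/-- The coefficient matrix that remains of `A` once the sign indexed by `none` has been averaged
out: that average replaces `exp (b * L)` by `cosh L ≤ exp (L ^ 2 / 2)`, and `L ^ 2` is the chaos of
a rank one matrix in the remaining signs. The constant `A none none` is accounted for separately. -/
def eliminateSign (A : Matrix (Option n) (Option n) ℝ) : Matrix n n ℝ :=
  A.submatrix some some + (2 : ℝ)⁻¹ • vecMulVec
    (fun x => A none (some x) + A (some x) none) (fun x => A none (some x) + A (some x) none)

lemma expect_exp_rademacherChaos_le_eliminateSign [DecidableEq n]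
    (A : Matrix (Option n) (Option n) ℝ) :
    𝔼 ε, Real.exp (rademacherChaos A ε) ≤
      Real.exp (A none none) * 𝔼 ε, Real.exp (rademacherChaos (eliminateSign A) ε) := by
  rw [expect_signs_option, mul_expect]
  refine expect_le_expect fun ε _ => ?_
  rw [eliminateSign, rademacherChaos_add, rademacherChaos_smul, rademacherChaos_vecMulVec_self,
    rademacherChaos_option, rademacherChaos_option]
  set L := (fun x => A none (some x) + A (some x) none) ⬝ᵥ signVec ℝ ε
  set Q := rademacherChaos (A.submatrix some some) ε
  calc _ = Real.exp (A none none) * (Real.exp Q * Real.cosh L) := by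
        rw [Real.cosh_eq]
        simp only [Units.val_one, Units.val_neg, Int.cast_one, Int.cast_neg, one_mul, neg_mul,
          Real.exp_add]
        ring
    _ ≤ Real.exp (A none none) * (Real.exp Q * Real.exp (L ^ 2 / 2)) := by
        gcongr
        exact Real.cosh_le_exp_half_sq L
    _ = _ := by rw [← Real.exp_add, inv_mul_eq_div]

lemma frobenius_norm_sq_option_ge (A : Matrix (Option n) (Option n) ℝ) :
    A none none ^ 2 + (∑ x, (A none (some x) + A (some x) none) ^ 2) / 2 +
      ‖A.submatrix some some‖ ^ 2 ≤ ‖A‖ ^ 2 := by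
  have hcross : (∑ x, (A none (some x) + A (some x) none) ^ 2) / 2 ≤
      ∑ x, A none (some x) ^ 2 + ∑ x, A (some x) none ^ 2 := by
    rw [sum_div, ← sum_add_distrib]
    refine sum_le_sum fun x _ => ?_
    linarith [add_sq_le (a := A none (some x)) (b := A (some x) none)]
  simp only [frobenius_norm_sq, Fintype.sum_option, submatrix_apply, sum_add_distrib,
    Real.norm_eq_abs, sq_abs]
  linarith

lemma eliminateSign_bounds {A : Matrix (Option n) (Option n) ℝ} (hA : ‖A‖ ≤ 1 / 4) :
    ‖eliminateSign A‖ ≤ 1 / 4 ∧ A none none + (eliminateSign A).trace + 4 * ‖eliminateSign A‖ ^ 2 ≤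
      A.trace + 4 * ‖A‖ ^ 2 := by
  set v : n → ℝ := fun x => A none (some x) + A (some x) none
  set A' := A.submatrix some some
  set B := eliminateSign A
  have hV : 0 ≤ v ⬝ᵥ v := sum_nonneg fun x _ => mul_self_nonneg (v x)
  have hAnorm : A none none ^ 2 + (v ⬝ᵥ v) / 2 + ‖A'‖ ^ 2 ≤ ‖A‖ ^ 2 := by
    simpa only [dotProduct, ← sq] using frobenius_norm_sq_option_ge A
  have hBnorm : ‖B‖ ≤ ‖A'‖ + (v ⬝ᵥ v) / 2 := by
    refine (norm_add_le _ _).trans_eq ?_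
    rw [norm_smul, frobenius_norm_vecMulVec_self, Real.norm_of_nonneg (by norm_num),
      inv_mul_eq_div]
  have hBtrace : B.trace = A'.trace + (v ⬝ᵥ v) / 2 := by
    refine (trace_add _ _).trans ?_
    rw [trace_smul, trace_vecMulVec, smul_eq_mul, inv_mul_eq_div]
  have hAtrace : A.trace = A none none + A'.trace := Fintype.sum_option _
  have hAsq : ‖A‖ ^ 2 ≤ (1 / 4) ^ 2 := pow_le_pow_left₀ (norm_nonneg A) hA 2
  have hA' : ‖A'‖ ≤ 1 / 4 := by nlinarith [sq_nonneg (A none none)]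
  have hBsq : ‖B‖ ^ 2 ≤ (‖A'‖ + (v ⬝ᵥ v) / 2) ^ 2 := pow_le_pow_left₀ (norm_nonneg B) hBnorm 2
  constructor
  · nlinarith [norm_nonneg A', sq_nonneg (A none none)]
  · rw [hBtrace, hAtrace]
    nlinarith [norm_nonneg A', sq_nonneg (A none none)]

lemma expect_exp_rademacherChaos_reindex {α β : Type*} [Fintype α] [Fintype β] [DecidableEq α]
    [DecidableEq β] (e : α ≃ β) (A : Matrix β β ℝ) :
    𝔼 ε, Real.exp (rademacherChaos A ε) = 𝔼 ε, Real.exp (rademacherChaos (A.submatrix e e) ε) := by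
  refine Fintype.expect_equiv (e.symm.arrowCongr (Equiv.refl _)) _ _ fun ε => congrArg Real.exp ?_
  simp only [rademacherChaos_eq_sum, submatrix_apply, signVec]
  simp [← e.sum_comp]

theorem expect_exp_rademacherChaos_le {n : Type*} [Fintype n] [DecidableEq n] (A : Matrix n n ℝ)
    (hA : ‖A‖ ≤ 1 / 4) :
    𝔼 ε, Real.exp (rademacherChaos A ε) ≤ Real.exp (A.trace + 4 * ‖A‖ ^ 2) := by
  suffices ∀ [DecidableEq n] (A : Matrix n n ℝ), ‖A‖ ≤ 1 / 4 →
      𝔼 ε, Real.exp (rademacherChaos A ε) ≤ Real.exp (A.trace + 4 * ‖A‖ ^ 2) from this A hA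
  clear! A
  refine Fintype.induction_empty_option (P := fun n _ => ∀ [DecidableEq n] (A : Matrix n n ℝ),
      ‖A‖ ≤ 1 / 4 → 𝔼 ε, Real.exp (rademacherChaos A ε) ≤ Real.exp (A.trace + 4 * ‖A‖ ^ 2))
    (fun m n _ e ih _ A hA => ?_) (fun A _ => ?_) (fun n _ ih inst A hA => ?_) n
  · let _ : Fintype m := Fintype.ofEquiv n e.symm
    let _ : DecidableEq m := e.decidableEq
    have htrace : (A.submatrix e e).trace = A.trace := e.sum_comp fun x => A x x
    have hnorm : ‖A.submatrix e e‖ = ‖A‖ := frobenius_norm_submatrix_equiv A e e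
    rw [expect_exp_rademacherChaos_reindex e, ← htrace, ← hnorm]
    exact ih _ (hnorm.trans_le hA)
  · simp [rademacherChaos]
  · classical
    obtain rfl : inst = Option.instDecidableEq := Subsingleton.elim _ _
    obtain ⟨hnorm, htrace⟩ := eliminateSign_bounds hA
    calc 𝔼 ε, Real.exp (rademacherChaos A ε)
        ≤ Real.exp (A none none) * 𝔼 ε, Real.exp (rademacherChaos (eliminateSign A) ε) :=
          expect_exp_rademacherChaos_le_eliminateSign A
      _ ≤ Real.exp (A none none) *
          Real.exp ((eliminateSign A).trace + 4 * ‖eliminateSign A‖ ^ 2) := by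
          gcongr
          exact ih _ hnorm
      _ ≤ Real.exp (A.trace + 4 * ‖A‖ ^ 2) := by
          rwa [← Real.exp_add, Real.exp_le_exp, ← add_assoc]

lemma expect_exp_re_rademacherChaos_sub_trace_le [DecidableEq n] (M : Matrix n n ℂ) :
    𝔼 ε, Real.exp ((4 * ‖M‖)⁻¹ * ((rademacherChaos M ε).re - M.trace.re)) ≤ 2 := by
  set c := (4 * ‖M‖)⁻¹ with hc
  have hc0 : 0 ≤ c := by positivity
  have hnorm : ‖c • M.map Complex.re‖ ≤ 1 / 4 := by
    calc ‖c • M.map Complex.re‖ ≤ c * ‖M‖ := by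
          rw [norm_smul, Real.norm_of_nonneg hc0]
          gcongr
          exact frobenius_norm_map_re_le M
      _ = 1 / 4 * (‖M‖⁻¹ * ‖M‖) := by rw [hc, mul_inv]; ring
      _ ≤ 1 / 4 := mul_le_of_le_one_right (by norm_num) inv_mul_le_one
  have htrace : (c • M.map Complex.re).trace = c * M.trace.re := by
    rw [trace_smul, smul_eq_mul]
    exact congrArg (c * ·) (Complex.re_sum _ _).symm
  calc _ = (𝔼 ε, Real.exp (rademacherChaos (c • M.map Complex.re) ε)) *
        Real.exp (-(c * M.trace.re)) := by
        rw [expect_mul]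
        refine expect_congr rfl fun ε _ => ?_
        rw [rademacherChaos_smul, re_rademacherChaos, ← Real.exp_add, mul_sub, sub_eq_add_neg]
    _ ≤ Real.exp ((c • M.map Complex.re).trace + 4 * ‖c • M.map Complex.re‖ ^ 2) *
        Real.exp (-(c * M.trace.re)) := by
        gcongr
        exact expect_exp_rademacherChaos_le _ hnorm
    _ ≤ Real.exp (1 / 4) := by
        rw [← Real.exp_add, Real.exp_le_exp, htrace]
        nlinarith [norm_nonneg (c • M.map Complex.re)]
    _ ≤ 1 / (1 - 1 / 4) := Real.exp_bound_div_one_sub_of_interval (by norm_num) (by norm_num)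
    _ ≤ 2 := by norm_num

lemma exists_forall_re_rademacherChaos_le {J : Type*} [Fintype J] (M : J → Matrix n n ℂ) {u : ℝ}
    (hu : 2 * (Fintype.card J : ℝ) < Real.exp (u / 4)) :
    ∃ ε, ∀ j, (rademacherChaos (M j) ε).re ≤ (M j).trace.re + u * ‖M j‖ := by
  classical
  set X : J → (n → ℤˣ) → ℝ :=
    fun j ε => (4 * ‖M j‖)⁻¹ * ((rademacherChaos (M j) ε).re - (M j).trace.re)
  have hmean : 𝔼 ε, ∑ j, Real.exp (X j ε) < Real.exp (u / 4) := by
    rw [expect_sum_comm]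
    calc ∑ j, 𝔼 ε, Real.exp (X j ε) ≤ ∑ _j : J, (2 : ℝ) :=
          sum_le_sum fun j _ => expect_exp_re_rademacherChaos_sub_trace_le (M j)
      _ = 2 * Fintype.card J := by rw [sum_const, card_univ, nsmul_eq_mul, mul_comm]
      _ < Real.exp (u / 4) := hu
  obtain ⟨ε, -, hε⟩ := exists_lt_of_expect_lt univ_nonempty hmean
  refine ⟨ε, fun j => ?_⟩
  obtain hM | hM := (norm_nonneg (M j)).eq_or_lt'
  · simp [norm_eq_zero.1 hM, rademacherChaos]
  · have hX : X j ε ≤ u / 4 := Real.exp_le_exp.1 <|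
      (single_le_sum (fun j _ => (Real.exp_pos (X j ε)).le) (mem_univ j)).trans hε.le
    rw [inv_mul_le_iff₀ (by positivity)] at hX
    linarith

lemma norm_le_two_mul_of_re_I_pow_mul_le {w : ℂ} {B : ℝ}
    (h : ∀ z : Fin 4, (Complex.I ^ (z : ℕ) * w).re ≤ B) : ‖w‖ ≤ 2 * B := by
  have hre : |w.re| ≤ B := abs_le'.2 ⟨by simpa using h 0, by simpa [pow_succ] using h 2⟩
  have him : |w.im| ≤ B := abs_le'.2 ⟨by simpa [pow_succ] using h 3, by simpa using h 1⟩
  linarith [Complex.norm_le_abs_re_add_abs_im w]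

/-- A complex chaos is controlled through the real parts of its four rotations by powers of `I`,
and a squared norm `‖W q *ᵥ ε‖ ^ 2` as the chaos of the Gram matrix of `W q`. -/
theorem exists_norm_rademacherChaos_sub_trace_le {P Q : Type*} [Fintype P] [Fintype Q]
    {m : Q → Type*} [∀ q, Fintype (m q)] (M : P → Matrix n n ℂ) (W : ∀ q, Matrix (m q) n ℂ) {u : ℝ}
    (hu0 : 0 ≤ u) (hu : 2 * (4 * Fintype.card P + Fintype.card Q : ℝ) < Real.exp (u / 4)) :
    ∃ ε, (∀ p, ‖rademacherChaos (M p) ε - (M p).trace‖ ≤ 2 * (u * ‖M p‖)) ∧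
      ∀ q, ∑ i, ‖(W q *ᵥ signVec ℂ ε) i‖ ^ 2 ≤ (1 + u) * ‖W q‖ ^ 2 := by
  obtain ⟨ε, hε⟩ := exists_forall_re_rademacherChaos_le
    (Sum.elim (fun p : P × Fin 4 => Complex.I ^ (p.2 : ℕ) • M p.1) fun q => (W q)ᴴ * W q) (u := u)
    (by simpa [mul_comm (4 : ℝ)] using hu)
  refine ⟨ε, fun p => norm_le_two_mul_of_re_I_pow_mul_le fun z => ?_, fun q => ?_⟩
  · have h := hε (.inl (p, z))
    simp only [Sum.elim_inl, rademacherChaos_smul, trace_smul, smul_eq_mul, norm_smul, norm_pow,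
      Complex.norm_I, one_pow, one_mul] at h
    rw [mul_sub, Complex.sub_re]
    linarith
  · have h := hε (.inr q)
    have htrace : ((W q)ᴴ * W q).trace.re = ‖W q‖ ^ 2 := by
      simp only [trace, diag_apply, mul_apply, conjTranspose_apply, RCLike.star_def,
        Complex.conj_mul', Complex.re_sum, ← Complex.ofReal_pow, Complex.ofReal_re]
      rw [sum_comm, frobenius_norm_sq]
    have hnorm : ‖(W q)ᴴ * W q‖ ≤ ‖W q‖ ^ 2 := by
      rw [sq]
      exact (frobenius_norm_mul _ _).trans_eq (by rw [frobenius_norm_conjTranspose])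
    simp only [Sum.elim_inr, rademacherChaos_conjTranspose_mul_self, Complex.ofReal_re,
      htrace] at h
    nlinarith

end RademacherChaos

section Kraus

open Finset
open scoped InnerProductSpace

variable {E : Type*} [NormedAddCommGroup E] [InnerProductSpace ℂ E]
variable {κ : Type*} [Fintype κ]

/-- The Kraus condition `∑ Kᵢ* Kᵢ = 1`, which says that `ρ ↦ ∑ Kᵢ ρ Kᵢ*` preserves the trace. -/
def IsTracePreserving [FiniteDimensional ℂ E] (K : κ → E →ₗ[ℂ] E) : Prop :=
  ∑ i, (K i).adjoint * K i = 1

/-- The transition probability `⟨ψ, Φ(|φ⟩⟨φ|) ψ⟩` from `φ` to `ψ` under the map `Φ` with Kraus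
operators `K`. -/
def transitionProb (K : κ → E →ₗ[ℂ] E) (φ ψ : E) : ℝ := ∑ i, ‖⟪ψ, K i φ⟫_ℂ‖ ^ 2

lemma transitionProb_smul_left (K : κ → E →ₗ[ℂ] E) (z : ℂ) (φ ψ : E) :
    transitionProb K (z • φ) ψ = ‖z‖ ^ 2 * transitionProb K φ ψ := by
  simp only [transitionProb, map_smul, inner_smul_right, norm_mul, mul_pow, mul_sum]

lemma transitionProb_smul_right (K : κ → E →ₗ[ℂ] E) (z : ℂ) (φ ψ : E) :
    transitionProb K φ (z • ψ) = ‖z‖ ^ 2 * transitionProb K φ ψ := by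
  simp only [transitionProb, inner_smul_left, norm_mul, RCLike.norm_conj, mul_pow, mul_sum]

section Bessel

variable [FiniteDimensional ℂ E] {K : κ → E →ₗ[ℂ] E}

lemma IsTracePreserving.sum_norm_sq (hK : IsTracePreserving K) (v : E) :
    ∑ i, ‖K i v‖ ^ 2 = ‖v‖ ^ 2 := by
  have h : ∑ i, ⟪K i v, K i v⟫_ℂ = ⟪v, v⟫_ℂ := by
    simp only [← LinearMap.adjoint_inner_right, ← inner_sum, ← Module.End.mul_apply,
      ← LinearMap.sum_apply]
    rw [show ∑ i, (K i).adjoint * K i = 1 from hK, Module.End.one_apply]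
  simp only [inner_self_eq_norm_sq_to_K] at h
  exact_mod_cast h

lemma IsTracePreserving.norm_apply_le (hK : IsTracePreserving K) (i : κ) (v : E) :
    ‖K i v‖ ≤ ‖v‖ := by
  rw [← sq_le_sq₀ (norm_nonneg _) (norm_nonneg _), ← hK.sum_norm_sq v]
  exact single_le_sum (f := fun i => ‖K i v‖ ^ 2) (fun _ _ => sq_nonneg _) (mem_univ i)

lemma IsTracePreserving.norm_sq_le_card_mul_norm_sq (hK : IsTracePreserving K) (v : E) :
    ‖v‖ ^ 2 ≤ Fintype.card κ * ‖v‖ ^ 2 := by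
  rw [← nsmul_eq_mul]
  nth_rw 1 [← hK.sum_norm_sq v]
  refine sum_le_card_nsmul _ _ _ fun i _ => ?_
  gcongr
  exact hK.norm_apply_le i v

lemma IsTracePreserving.norm_adjoint_apply_le (hK : IsTracePreserving K) (i : κ) (v : E) :
    ‖(K i).adjoint v‖ ≤ ‖v‖ := by
  have h : ‖(K i).adjoint v‖ * ‖(K i).adjoint v‖ ≤ ‖v‖ * ‖(K i).adjoint v‖ :=
    calc _ = RCLike.re ⟪v, K i ((K i).adjoint v)⟫_ℂ := by
          rw [← LinearMap.adjoint_inner_left, inner_self_eq_norm_mul_norm]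
      _ ≤ ‖v‖ * ‖K i ((K i).adjoint v)‖ := re_inner_le_norm _ _
      _ ≤ _ := by
          gcongr
          exact hK.norm_apply_le i _
  obtain h0 | h0 := (norm_nonneg ((K i).adjoint v)).eq_or_lt'
  · rw [h0]
    positivity
  · exact le_of_mul_le_mul_right h h0

variable {τ : Type*} [Fintype τ] {c : τ → E}

lemma IsTracePreserving.sum_transitionProb_right_le (hK : IsTracePreserving K)
    (hc : Orthonormal ℂ c) (z : E) : ∑ x, transitionProb K z (c x) ≤ ‖z‖ ^ 2 := by
  rw [← hK.sum_norm_sq z]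
  simp only [transitionProb]
  rw [sum_comm]
  exact sum_le_sum fun i _ => hc.sum_inner_products_le _

lemma IsTracePreserving.sum_transitionProb_left_le (hK : IsTracePreserving K)
    (hc : Orthonormal ℂ c) (z : E) :
    ∑ x, transitionProb K (c x) z ≤ Fintype.card κ * ‖z‖ ^ 2 := by
  simp only [transitionProb]
  rw [sum_comm, ← nsmul_eq_mul]
  refine sum_le_card_nsmul _ _ _ fun i _ => ?_
  calc ∑ x, ‖⟪z, K i (c x)⟫_ℂ‖ ^ 2 = ∑ x, ‖⟪c x, (K i).adjoint z⟫_ℂ‖ ^ 2 :=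
        sum_congr rfl fun x _ => by rw [← LinearMap.adjoint_inner_left, norm_inner_symm]
    _ ≤ ‖(K i).adjoint z‖ ^ 2 := hc.sum_inner_products_le _
    _ ≤ ‖z‖ ^ 2 := by
        gcongr
        exact hK.norm_adjoint_apply_le i z

end Bessel

section Compression

lemma norm_sq_le_of_norm_sub_le {F : Type*} [SeminormedAddCommGroup F] {v w : F} {r : ℝ}
    (h : ‖v - w‖ ≤ r) : ‖v‖ ^ 2 ≤ 2 * ‖w‖ ^ 2 + 2 * r ^ 2 := by
  have hv : ‖v‖ ≤ ‖w‖ + r := by linarith [norm_le_norm_add_norm_sub' v w]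
  calc ‖v‖ ^ 2 ≤ (‖w‖ + r) ^ 2 := by gcongr
    _ ≤ 2 * ‖w‖ ^ 2 + 2 * r ^ 2 := by rw [← mul_add]; exact add_sq_le

open scoped Matrix.Norms.Frobenius

variable {σ τ : Type*} [Fintype σ] [Fintype τ]

/-- The matrix of the compression of the operator `L` to the span of an orthonormal family `c`. -/
def compression (c : τ → E) (L : E →ₗ[ℂ] E) : Matrix τ τ ℂ := of fun x y => ⟪c x, L (c y)⟫_ℂ

lemma trace_compression_inr (b : OrthonormalBasis (σ ⊕ τ) ℂ E) (L : E →ₗ[ℂ] E) :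
    (compression (b ∘ Sum.inr) L).trace =
      LinearMap.trace ℂ E L - ∑ t, ⟪b (.inl t), L (b (.inl t))⟫_ℂ := by
  rw [LinearMap.trace_eq_sum_inner L b, Fintype.sum_sum_type, add_sub_cancel_left]
  rfl

lemma sum_norm_trace_compression_inr_sq_le (K : κ → E →ₗ[ℂ] E)
    (b : OrthonormalBasis (σ ⊕ τ) ℂ E) :
    ∑ i, ‖(compression (b ∘ Sum.inr) (K i)).trace‖ ^ 2 ≤
      2 * ∑ i, ‖LinearMap.trace ℂ E (K i)‖ ^ 2 +
        2 * (Fintype.card σ * ∑ t, transitionProb K (b (.inl t)) (b (.inl t))) := by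
  simp only [transitionProb]
  rw [sum_comm, mul_sum, mul_sum, mul_sum, ← sum_add_distrib]
  refine sum_le_sum fun i _ => ?_
  have hσ : ‖∑ t, ⟪b (.inl t), K i (b (.inl t))⟫_ℂ‖ ^ 2 ≤
      Fintype.card σ * ∑ t, ‖⟪b (.inl t), K i (b (.inl t))⟫_ℂ‖ ^ 2 :=
    (pow_le_pow_left₀ (norm_nonneg _) (norm_sum_le _ _) 2).trans sq_sum_le_card_mul_sum_sq
  have htrace : ‖(compression (b ∘ Sum.inr) (K i)).trace - LinearMap.trace ℂ E (K i)‖ ≤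
      ‖∑ t, ⟪b (.inl t), K i (b (.inl t))⟫_ℂ‖ := by
    rw [trace_compression_inr, sub_sub_cancel_left, norm_neg]
  linarith [norm_sq_le_of_norm_sub_le htrace]

lemma IsTracePreserving.sum_norm_compression_sq_le [FiniteDimensional ℂ E] {K : κ → E →ₗ[ℂ] E}
    (hK : IsTracePreserving K) {c : τ → E} (hc : Orthonormal ℂ c) :
    ∑ i, ‖compression c (K i)‖ ^ 2 ≤ Fintype.card τ := by
  calc ∑ i, ‖compression c (K i)‖ ^ 2 = ∑ y, ∑ x, transitionProb K (c y) (c x) := by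
        simp only [frobenius_norm_sq, transitionProb, sum_comm (s := univ (α := κ))]
        exact sum_comm
    _ ≤ ∑ y, ‖c y‖ ^ 2 := sum_le_sum fun y _ => hK.sum_transitionProb_right_le hc (c y)
    _ = Fintype.card τ := by simp [hc.norm_eq_one]

/-- The vector `∑ ± c x` with signs `ε`. -/
def signedSum (c : τ → E) (ε : τ → ℤˣ) : E := ∑ x, signVec ℂ ε x • c x

lemma norm_signedSum_sq {c : τ → E} (hc : Orthonormal ℂ c) (ε : τ → ℤˣ) :
    ‖signedSum c ε‖ ^ 2 = Fintype.card τ := by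
  rw [← inner_self_eq_norm_sq (𝕜 := ℂ), signedSum, hc.inner_sum]
  simp [signVec, ← Int.cast_mul, ← Units.val_mul]

lemma inner_signedSum_left (c : τ → E) (ε : τ → ℤˣ) (z : E) :
    ⟪signedSum c ε, z⟫_ℂ = (fun x => ⟪c x, z⟫_ℂ) ⬝ᵥ signVec ℂ ε := by
  simp [signedSum, signVec, dotProduct]

lemma inner_apply_signedSum (L : E →ₗ[ℂ] E) (c : τ → E) (ε : τ → ℤˣ) (z : E) :
    ⟪z, L (signedSum c ε)⟫_ℂ = (fun x => ⟪z, L (c x)⟫_ℂ) ⬝ᵥ signVec ℂ ε := by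
  simp [signedSum, dotProduct, mul_comm]

lemma inner_signedSum_apply_signedSum (L : E →ₗ[ℂ] E) (c : τ → E) (ε : τ → ℤˣ) :
    ⟪signedSum c ε, L (signedSum c ε)⟫_ℂ = rademacherChaos (compression c L) ε := by
  rw [inner_signedSum_left, rademacherChaos, dotProduct_comm]
  exact congrArg _ (funext fun x => inner_apply_signedSum L c ε (c x))

variable {ι : Type*} [Fintype ι] {κ : ι → Type*} [∀ a, Fintype (κ a)]
  [FiniteDimensional ℂ E] {K : ∀ a, κ a → E →ₗ[ℂ] E} {u : ℝ}

lemma exists_transitionProb_signedSum_le (hK : ∀ a, IsTracePreserving (K a)) {c : τ → E}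
    (hc : Orthonormal ℂ c) (ψ : σ → E) (hu0 : 0 ≤ u)
    (hu : 2 * (4 * Fintype.card (Σ a, κ a) + 2 * (Fintype.card ι * Fintype.card σ) : ℝ) <
      Real.exp (u / 4)) :
    ∃ ε, ∀ a, transitionProb (K a) (signedSum c ε) (signedSum c ε) ≤
        2 * ∑ i, ‖(compression c (K a i)).trace‖ ^ 2 + 8 * u ^ 2 * Fintype.card τ ∧
      ∀ t, transitionProb (K a) (ψ t) (signedSum c ε) ≤
          (1 + u) * (Fintype.card (κ a) * ‖ψ t‖ ^ 2) ∧
        transitionProb (K a) (signedSum c ε) (ψ t) ≤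
          (1 + u) * (Fintype.card (κ a) * ‖ψ t‖ ^ 2) := by
  obtain ⟨ε, hchaos, hlin⟩ := exists_norm_rademacherChaos_sub_trace_le
    (fun p : Σ a, κ a => compression c (K p.1 p.2))
    (fun q : (ι × σ) × Bool => of fun i x =>
      bif q.2 then ⟪c x, K q.1.1 i (ψ q.1.2)⟫_ℂ else ⟪ψ q.1.2, K q.1.1 i (c x)⟫_ℂ)
    hu0 (by simpa [mul_comm _ (2 : ℝ)] using hu)
  refine ⟨ε, fun a => ⟨?_, fun t => ⟨?_, ?_⟩⟩⟩
  · have hterm (i : κ a) : ‖⟪signedSum c ε, K a i (signedSum c ε)⟫_ℂ‖ ^ 2 ≤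
        2 * ‖(compression c (K a i)).trace‖ ^ 2 + 8 * u ^ 2 * ‖compression c (K a i)‖ ^ 2 := by
      rw [inner_signedSum_apply_signedSum]
      linarith [norm_sq_le_of_norm_sub_le (hchaos ⟨a, i⟩)]
    refine (sum_le_sum fun i _ => hterm i).trans ?_
    rw [sum_add_distrib, ← mul_sum, ← mul_sum]
    gcongr
    exact (hK a).sum_norm_compression_sq_le hc
  · have h := hlin ((a, t), true)
    calc transitionProb (K a) (ψ t) (signedSum c ε) ≤
          (1 + u) * ∑ x, transitionProb (K a) (ψ t) (c x) := by
          simp only [frobenius_norm_sq, of_apply, cond_true] at h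
          simp only [transitionProb, inner_signedSum_left]
          rwa [sum_comm]
      _ ≤ _ := by
          gcongr
          exact ((hK a).sum_transitionProb_right_le hc (ψ t)).trans
            ((hK a).norm_sq_le_card_mul_norm_sq (ψ t))
  · have h := hlin ((a, t), false)
    calc transitionProb (K a) (signedSum c ε) (ψ t) ≤
          (1 + u) * ∑ x, transitionProb (K a) (c x) (ψ t) := by
          simp only [frobenius_norm_sq, of_apply, cond_false] at h
          simp only [transitionProb, inner_apply_signedSum]
          rwa [sum_comm]
      _ ≤ _ := by
          gcongr
          exact (hK a).sum_transitionProb_left_le hc (ψ t)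

end Compression

end Kraus

section Greedy

open Finset Module
open scoped InnerProductSpace

lemma exists_orthonormalBasis_apply_eq {𝕜 E σ I : Type*} [RCLike 𝕜] [NormedAddCommGroup E]
    [InnerProductSpace 𝕜 E] [FiniteDimensional 𝕜 E] [Fintype I] {ψ : σ → E}
    (hψ : Orthonormal 𝕜 ψ) {f : σ → I} (hf : f.Injective) (hI : finrank 𝕜 E = Fintype.card I) :
    ∃ b : OrthonormalBasis I 𝕜 E, ∀ s, b (f s) = ψ s := by
  have hres : Orthonormal 𝕜 ((Set.range f).domRestrict (f.extend ψ 0)) := by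
    convert hψ.comp _ (Equiv.ofInjective f hf).symm.injective
    ext ⟨_, s, rfl⟩
    simp [hf.extend_apply]
  obtain ⟨b, hb⟩ := hres.exists_orthonormalBasis_extension_of_card_eq hI
  exact ⟨b, fun s => (hb _ ⟨s, rfl⟩).trans (hf.extend_apply ψ 0 s)⟩

variable {E : Type*} [NormedAddCommGroup E] [InnerProductSpace ℂ E] [FiniteDimensional ℂ E]
variable {ι σ τ : Type*} [Fintype ι] [Fintype σ] [Fintype τ] {κ : ι → Type*} [∀ a, Fintype (κ a)]
variable {K : ∀ a, κ a → E →ₗ[ℂ] E} {u η : ℝ}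

lemma exists_next_codeword [Nonempty τ] (hK : ∀ a, IsTracePreserving (K a))
    (b : OrthonormalBasis (σ ⊕ τ) ℂ E)
    (hb : ∀ a t, transitionProb (K a) (b (.inl t)) (b (.inl t)) ≤ η) (hu0 : 0 ≤ u)
    (hu : 2 * (4 * Fintype.card (Σ a, κ a) + 2 * (Fintype.card ι * Fintype.card σ) : ℝ) <
      Real.exp (u / 4))
    (hση : (Fintype.card σ : ℝ) ^ 2 * η ≤ 1)
    (htrace : ∀ a, 4 * (∑ i, ‖LinearMap.trace ℂ E (K a i)‖ ^ 2 + 1) +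
      8 * u ^ 2 * Fintype.card τ ≤ η * (Fintype.card τ : ℝ) ^ 2)
    (hcard : ∀ a, (1 + u) * Fintype.card (κ a) ≤ η * Fintype.card τ) :
    ∃ v : E, ‖v‖ = 1 ∧ (∀ t, ⟪b (.inl t), v⟫_ℂ = 0) ∧ ∀ a, transitionProb (K a) v v ≤ η ∧
      ∀ t, transitionProb (K a) (b (.inl t)) v ≤ η ∧ transitionProb (K a) v (b (.inl t)) ≤ η := by
  set c : τ → E := b ∘ Sum.inr
  have hc : Orthonormal ℂ c := b.orthonormal.comp _ Sum.inr_injective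
  set m : ℝ := (Fintype.card τ : ℝ)
  have hm : 0 < m := Nat.cast_pos.2 Fintype.card_pos
  obtain ⟨ε, hε⟩ := exists_transitionProb_signedSum_le hK hc (fun t => b (.inl t)) hu0 hu
  obtain ⟨z, hz⟩ : ∃ z : ℂ, ‖z‖ ^ 2 = m⁻¹ := ⟨((√m)⁻¹ : ℝ), by
    rw [Complex.norm_real, Real.norm_eq_abs, sq_abs, inv_pow, Real.sq_sqrt hm.le]⟩
  have hcross (a : ι) (t : σ) : (1 + u) * (Fintype.card (κ a) * ‖b (.inl t)‖ ^ 2) ≤ m * η := by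
    rw [b.norm_eq_one, one_pow, mul_one, mul_comm m]
    exact hcard a
  refine ⟨z • signedSum c ε, ?_, fun t => ?_, fun a => ⟨?_, fun t => ⟨?_, ?_⟩⟩⟩
  · rw [← sq_eq_sq₀ (norm_nonneg _) zero_le_one, norm_smul, mul_pow, hz, norm_signedSum_sq hc,
      inv_mul_cancel₀ hm.ne', one_pow]
  · have hbc (x : τ) : ⟪b (.inl t), c x⟫_ℂ = 0 := b.orthonormal.2 Sum.inl_ne_inr
    simp [signedSum, hbc]
  · have hσ : Fintype.card σ * ∑ t, transitionProb (K a) (b (.inl t)) (b (.inl t)) ≤ 1 := by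
      calc _ ≤ Fintype.card σ * ∑ _t : σ, η := by
            gcongr with t
            exact hb a t
        _ = (Fintype.card σ : ℝ) ^ 2 * η := by
            rw [sum_const, card_univ, nsmul_eq_mul, ← mul_assoc, sq]
        _ ≤ 1 := hση
    have hself := (hε a).1
    have htr := sum_norm_trace_compression_inr_sq_le (K a) b
    rw [transitionProb_smul_left, transitionProb_smul_right, hz, ← mul_assoc, ← mul_inv, ← sq,
      inv_mul_le_iff₀ (by positivity)]
    linarith [htrace a]
  · rw [transitionProb_smul_right, hz, inv_mul_le_iff₀ hm]
    exact ((hε a).2 t).1.trans (hcross a t)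
  · rw [transitionProb_smul_left, hz, inv_mul_le_iff₀ hm]
    exact ((hε a).2 t).2.trans (hcross a t)

lemma quadratic_le_of_le_two_mul {D m T u η : ℝ} (hD : 0 < D) (hDm : D ≤ 2 * m) (hT : 0 ≤ T)
    (h : 16 * T + 16 * u ^ 2 * D ≤ η * D ^ 2) : 4 * T + 8 * u ^ 2 * m ≤ η * m ^ 2 := by
  obtain ⟨r, rfl⟩ : ∃ r, m = r * D := ⟨m / D, (div_mul_cancel₀ m hD.ne').symm⟩
  have hr : 1 ≤ 2 * r := by nlinarith
  have hr2 : 1 ≤ 4 * r ^ 2 := by nlinarith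
  calc 4 * T + 8 * u ^ 2 * (r * D) ≤
        4 * T * (4 * r ^ 2) + 8 * u ^ 2 * (r * D) * (2 * r) := by
        have : 0 ≤ r := by linarith
        refine add_le_add ?_ ?_ <;> exact le_mul_of_one_le_right (by positivity) ‹_›
    _ = r ^ 2 * (16 * T + 16 * u ^ 2 * D) := by ring
    _ ≤ r ^ 2 * (η * D ^ 2) := by gcongr
    _ = η * (r * D) ^ 2 := by ring

lemma orthonormal_option_elim {𝕜 E σ : Type*} [RCLike 𝕜] [NormedAddCommGroup E]
    [InnerProductSpace 𝕜 E] {ψ : σ → E} (hψ : Orthonormal 𝕜 ψ) {v : E} (hv : ‖v‖ = 1)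
    (hψv : ∀ s, ⟪ψ s, v⟫_𝕜 = 0) : Orthonormal 𝕜 fun o : Option σ => o.elim v ψ := by
  refine ⟨Option.rec hv hψ.1, ?_⟩
  rintro (_ | s) (_ | t) hst
  · exact absurd rfl hst
  · exact inner_eq_zero_symm.1 (hψv t)
  · exact hψv s
  · exact hψ.2 fun h => hst (congrArg some h)

lemma exists_orthonormal_option_transitionProb_le (hK : ∀ a, IsTracePreserving (K a))
    (hσ : 2 * (Fintype.card σ + 1) ≤ finrank ℂ E) (hση : (Fintype.card σ : ℝ) ^ 2 * η ≤ 1)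
    (hu0 : 0 ≤ u)
    (hu : 2 * (4 * Fintype.card (Σ a, κ a) + 2 * (Fintype.card ι * Fintype.card σ) : ℝ) <
      Real.exp (u / 4))
    (htrace : ∀ a, 16 * (∑ i, ‖LinearMap.trace ℂ E (K a i)‖ ^ 2 + 1) +
      16 * u ^ 2 * finrank ℂ E ≤ η * (finrank ℂ E : ℝ) ^ 2)
    (hcard : ∀ a, 2 * ((1 + u) * Fintype.card (κ a)) ≤ η * finrank ℂ E) {ψ : σ → E}
    (hψ : Orthonormal ℂ ψ) (hψη : ∀ a s t, transitionProb (K a) (ψ s) (ψ t) ≤ η) :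
    ∃ ψ' : Option σ → E, Orthonormal ℂ ψ' ∧ ∀ a s t, transitionProb (K a) (ψ' s) (ψ' t) ≤ η := by
  let τ := Fin (finrank ℂ E - Fintype.card σ)
  have hcardτ : Fintype.card τ = finrank ℂ E - Fintype.card σ := Fintype.card_fin _
  have : Nonempty τ := Fintype.card_pos_iff.1 (by omega)
  have hdim : (0 : ℝ) < finrank ℂ E := by
    norm_cast
    omega
  have hhalf : (finrank ℂ E : ℝ) ≤ 2 * Fintype.card τ := by
    norm_cast
    omega
  obtain ⟨b, hb⟩ := exists_orthonormalBasis_apply_eq hψ (Sum.inl_injective (β := τ))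
    (by rw [Fintype.card_sum]; omega)
  obtain ⟨v, hv, hbv, hvη⟩ := exists_next_codeword hK b
    (fun a t => by rw [hb]; exact hψη a t t) hu0 hu hση
    (fun a => quadratic_le_of_le_two_mul hdim hhalf (by positivity) (htrace a))
    (fun a => by
      have hηdim : 0 ≤ η * finrank ℂ E := (hcard a).trans' (by positivity)
      have hη : 0 ≤ η := nonneg_of_mul_nonneg_left hηdim hdim
      linarith [hcard a, mul_le_mul_of_nonneg_left hhalf hη])
  simp only [hb] at hbv hvη
  refine ⟨fun o => o.elim v ψ, orthonormal_option_elim hψ hv hbv, fun a => ?_⟩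
  rintro (_ | s) (_ | t)
  exacts [(hvη a).1, ((hvη a).2 t).2, ((hvη a).2 s).1, hψη a s t]

theorem exists_orthonormal_transitionProb_le (hK : ∀ a, IsTracePreserving (K a)) {N : ℕ}
    (hN : 2 * N ≤ finrank ℂ E) (hNη : (N : ℝ) ^ 2 * η ≤ 1) (hu0 : 0 ≤ u)
    (hu : 2 * (4 * Fintype.card (Σ a, κ a) + 2 * (Fintype.card ι * N) : ℝ) < Real.exp (u / 4))
    (htrace : ∀ a, 16 * (∑ i, ‖LinearMap.trace ℂ E (K a i)‖ ^ 2 + 1) +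
      16 * u ^ 2 * finrank ℂ E ≤ η * (finrank ℂ E : ℝ) ^ 2)
    (hcard : ∀ a, 2 * ((1 + u) * Fintype.card (κ a)) ≤ η * finrank ℂ E) (hσ : Fintype.card σ ≤ N) :
    ∃ ψ : σ → E, Orthonormal ℂ ψ ∧ ∀ a s t, transitionProb (K a) (ψ s) (ψ t) ≤ η := by
  revert hσ
  refine Fintype.induction_empty_option (P := fun σ _ => Fintype.card σ ≤ N → ∃ ψ : σ → E,
    Orthonormal ℂ ψ ∧ ∀ a s t, transitionProb (K a) (ψ s) (ψ t) ≤ η)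
    (fun σ' σ _ e ih hσ => ?_) (fun _ => ⟨PEmpty.elim, ⟨nofun, nofun⟩, nofun⟩)
    (fun σ _ ih hσ => ?_) σ
  · let _ := Fintype.ofEquiv σ e.symm
    obtain ⟨ψ, hψ, hψη⟩ := ih ((Fintype.card_congr e).trans_le hσ)
    exact ⟨ψ ∘ e.symm, hψ.comp _ e.symm.injective, fun a s t => hψη a _ _⟩
  · rw [Fintype.card_option] at hσ
    obtain ⟨ψ, hψ, hψη⟩ := ih (by omega)
    have hσN : (Fintype.card σ : ℝ) ≤ N := by
      norm_cast
      omega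
    refine exists_orthonormal_option_transitionProb_le hK (by omega) ?_ hu0 (hu.trans_le' ?_)
      htrace hcard hψ hψη
    · obtain hη | hη := le_total η 0
      · exact (mul_nonpos_of_nonneg_of_nonpos (sq_nonneg _) hη).trans zero_le_one
      · exact hNη.trans' (by gcongr)
    · gcongr

end Greedy

section Parameters

open Filter

lemma eventually_mul_rpow_le_rpow (C : ℝ) {p q : ℝ} (hpq : p < q) :
    ∀ᶠ D : ℝ in atTop, C * D ^ p ≤ D ^ q := by
  filter_upwards [eventually_gt_atTop 0,
    (tendsto_rpow_atTop (sub_pos.2 hpq)).eventually_ge_atTop C] with D hD hC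
  calc C * D ^ p ≤ D ^ (q - p) * D ^ p := by gcongr
    _ = D ^ q := by rw [← Real.rpow_add hD, sub_add_cancel]

lemma eventually_mul_two_rpow_rpow_mul_lt_exp (C : ℝ) {α β : ℝ} (hαβ : α < β) (hβ : 0 < β) :
    ∀ᶠ D : ℝ in atTop, C * ((2 : ℝ) ^ D ^ α * D) < Real.exp (D ^ β / 4) := by
  have hlog := (isLittleO_log_rpow_atTop hβ).bound (by norm_num : (0 : ℝ) < 1 / 16)
  have hexp := Real.tendsto_exp_atTop.comp
    ((tendsto_rpow_atTop hβ).atTop_div_const (by norm_num : (0 : ℝ) < 16))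
  filter_upwards [eventually_ge_atTop 1, eventually_mul_rpow_le_rpow 8 hαβ, hlog,
    hexp.eventually_gt_atTop C] with D hD hDα hDlog hC
  have hD0 : 0 < D := by linarith
  have htwo : (2 : ℝ) ^ D ^ α ≤ Real.exp (D ^ β / 8) := by
    calc (2 : ℝ) ^ D ^ α ≤ Real.exp 1 ^ D ^ α := by
          gcongr
          linarith [Real.exp_one_gt_d9]
      _ = Real.exp (D ^ α) := Real.exp_one_rpow _
      _ ≤ Real.exp (D ^ β / 8) := Real.exp_le_exp.2 (by linarith)
  have hself : D ≤ Real.exp (D ^ β / 16) := by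
    rw [← Real.log_le_iff_le_exp hD0]
    calc Real.log D ≤ ‖Real.log D‖ := Real.le_norm_self _
      _ ≤ 1 / 16 * ‖D ^ β‖ := hDlog
      _ = D ^ β / 16 := by rw [Real.norm_of_nonneg (by positivity)]; ring
  calc C * ((2 : ℝ) ^ D ^ α * D) < Real.exp (D ^ β / 16) * ((2 : ℝ) ^ D ^ α * D) := by
        gcongr
        exact hC
    _ ≤ Real.exp (D ^ β / 16) * (Real.exp (D ^ β / 8) * Real.exp (D ^ β / 16)) := by gcongr
    _ = Real.exp (D ^ β / 4) := by rw [← Real.exp_add, ← Real.exp_add]; ring_nf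

lemma eventually_trace_bound (C : ℝ) {φ β κ : ℝ} (hκφ : κ < φ) (hκβ : κ + 2 * β < 1) (hκ : κ < 2) :
    ∀ᶠ D : ℝ in atTop,
      16 * (C * D ^ (-φ) * D ^ 2 + 1) + 16 * (D ^ β) ^ 2 * D ≤ D ^ (-κ) * D ^ 2 := by
  filter_upwards [eventually_gt_atTop 0,
    eventually_mul_rpow_le_rpow (48 * C) (show -φ + 2 < -κ + 2 by linarith),
    eventually_mul_rpow_le_rpow 48 (show 0 < -κ + 2 by linarith),
    eventually_mul_rpow_le_rpow 48 (show β * 2 + 1 < -κ + 2 by linarith)] with D hD hφ h0 hβ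
  simp only [Real.rpow_add hD, Real.rpow_mul hD.le, Real.rpow_two, Real.rpow_one,
    Real.rpow_zero] at hφ h0 hβ
  linarith

lemma eventually_card_bound {β δ κ : ℝ} (hκδ : κ < δ) (hκβ : κ + β < δ) :
    ∀ᶠ D : ℝ in atTop, 2 * ((1 + D ^ β) * D ^ (1 - δ)) ≤ D ^ (-κ) * D := by
  filter_upwards [eventually_gt_atTop 0,
    eventually_mul_rpow_le_rpow 4 (show 1 - δ < -κ + 1 by linarith),
    eventually_mul_rpow_le_rpow 4 (show β + (1 - δ) < -κ + 1 by linarith)] with D hD h0 hβ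
  rw [Real.rpow_add_one hD.ne'] at h0 hβ
  rw [Real.rpow_add hD] at hβ
  linarith

lemma exists_eventually_parameters (C : ℝ) {α δ κ φ : ℝ} (hα : 0 ≤ α)
    (hκα : κ < 1 - 2 * α) (hκδ : κ < δ - α) (hκφ : κ < φ) :
    ∃ β : ℝ, ∀ᶠ D : ℝ in atTop, 12 * ((2 : ℝ) ^ D ^ α * D) < Real.exp (D ^ β / 4) ∧
      16 * (C * D ^ (-φ) * D ^ 2 + 1) + 16 * (D ^ β) ^ 2 * D ≤ D ^ (-κ) * D ^ 2 ∧
      2 * ((1 + D ^ β) * D ^ (1 - δ)) ≤ D ^ (-κ) * D := by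
  obtain ⟨β, hαβ, hβ⟩ := exists_between (a₁ := α) (a₂ := min ((1 - κ) / 2) (δ - κ))
    (lt_min (by linarith) (by linarith))
  obtain ⟨hβ1, hβδ⟩ := lt_min_iff.1 hβ
  exact ⟨β, (eventually_mul_two_rpow_rpow_mul_lt_exp 12 hαβ (hα.trans_lt hαβ)).and <|
    (eventually_trace_bound C hκφ (by linarith) (by linarith)).and
      (eventually_card_bound (by linarith) (by linarith))⟩

lemma eventually_two_pow_of_eventually {p : ℝ → Prop} (hp : ∀ᶠ D in atTop, p D) {γ : ℝ}
    (hγ : 0 < γ) : ∀ᶠ k : ℕ in atTop, ∀ n : ℕ, (n : ℝ) = γ * k → p (2 ^ n) := by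
  have htendsto : Tendsto (fun k : ℕ => (2 : ℝ) ^ (γ * k)) atTop atTop :=
    (tendsto_rpow_atTop_of_base_gt_one 2 one_lt_two).comp
      (tendsto_natCast_atTop_atTop.const_mul_atTop hγ)
  filter_upwards [htendsto.eventually hp] with k hk n hn
  rwa [← Real.rpow_natCast, hn]

lemma two_pow_rpow_neg_two_div {γ : ℝ} (hγ : γ ≠ 0) {k n : ℕ} (hn : (n : ℝ) = γ * k) :
    ((2 : ℝ) ^ n) ^ (-(2 / γ)) = (((2 : ℝ) ^ k) ^ 2)⁻¹ := by
  rw [← Real.rpow_natCast, ← Real.rpow_mul zero_le_two, hn, ← pow_mul, ← Real.rpow_natCast,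
    ← Real.rpow_neg zero_le_two]
  congr 1
  push_cast
  field_simp

end Parameters

section Matrices

open scoped InnerProductSpace

variable {I : Type*} [Fintype I] [DecidableEq I]

lemma isTracePreserving_toEuclideanLin {κ : Type*} [Fintype κ] {K : κ → Matrix I I ℂ}
    (hK : ∑ i, (K i)ᴴ * K i = 1) :
    IsTracePreserving fun i => toEuclideanLin (K i) := by
  simp only [IsTracePreserving, ← toEuclideanLin_conjTranspose_eq_adjoint]
  calc ∑ i, toEuclideanLin (K i)ᴴ * toEuclideanLin (K i)
      = toEuclideanLin (∑ i, (K i)ᴴ * K i) := by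
        rw [map_sum]
        exact Finset.sum_congr rfl fun i _ => (toLpLin_mul_same 2 _ _).symm
    _ = 1 := by rw [hK, toLpLin_one, Module.End.one_eq_id]

lemma trace_toEuclideanLin (A : Matrix I I ℂ) :
    LinearMap.trace ℂ (EuclideanSpace ℂ I) (toEuclideanLin A) = A.trace := by
  simp [LinearMap.trace_eq_sum_inner _ (EuclideanSpace.basisFun I ℂ), trace,
    EuclideanSpace.inner_single_left]

lemma exists_unitaryGroup_star_mul_mul_apply {σ : Type*} {ψ : σ → EuclideanSpace ℂ I}
    (hψ : Orthonormal ℂ ψ) {f : σ → I} (hf : f.Injective) :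
    ∃ U ∈ unitaryGroup I ℂ, ∀ (A : Matrix I I ℂ) (s t : σ),
      (star U * A * U) (f t) (f s) = ⟪ψ t, toEuclideanLin A (ψ s)⟫_ℂ := by
  obtain ⟨b, hb⟩ := exists_orthonormalBasis_apply_eq hψ hf finrank_euclideanSpace
  let e := EuclideanSpace.basisFun I ℂ
  refine ⟨e.toBasis.toMatrix b, e.toMatrix_orthonormalBasis_mem_unitary b, fun A s t => ?_⟩
  rw [← hb t, ← hb s, EuclideanSpace.inner_eq_star_dotProduct, ofLp_toLpLin, toLin'_apply,
    Matrix.mul_assoc, dotProduct_comm]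
  rfl

variable {ι σ : Type*} [Fintype ι] [Fintype σ] {κ : ι → Type*} [∀ a, Fintype (κ a)] {u : ℝ}

theorem exists_unitaryGroup_sum_norm_sq_le {K : ∀ a, κ a → Matrix I I ℂ}
    (hK : ∀ a, ∑ i, (K a i)ᴴ * K a i = 1) {f : σ → I} (hf : f.Injective)
    (hσ : 2 * Fintype.card σ ≤ Fintype.card I) (hu0 : 0 ≤ u)
    (hu : 2 * (4 * Fintype.card (Σ a, κ a) + 2 * (Fintype.card ι * Fintype.card σ) : ℝ) <
      Real.exp (u / 4))
    (htrace : ∀ a, 16 * (∑ i, ‖(K a i).trace‖ ^ 2 + 1) + 16 * u ^ 2 * Fintype.card I ≤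
      ((Fintype.card σ : ℝ) ^ 2)⁻¹ * (Fintype.card I : ℝ) ^ 2)
    (hcard : ∀ a, 2 * ((1 + u) * Fintype.card (κ a)) ≤
      ((Fintype.card σ : ℝ) ^ 2)⁻¹ * Fintype.card I) :
    ∃ U ∈ unitaryGroup I ℂ, ∀ (s : σ) (a : ι),
      ∑ t, ∑ i, ‖(star U * K a i * U) (f t) (f s)‖ ^ 2 ≤ (Fintype.card σ : ℝ)⁻¹ := by
  obtain ⟨ψ, hψ, hψK⟩ := exists_orthonormal_transitionProb_le (σ := σ)
    (fun a => isTracePreserving_toEuclideanLin (hK a)) (by rwa [finrank_euclideanSpace])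
    mul_inv_le_one hu0 hu (by simpa only [trace_toEuclideanLin, finrank_euclideanSpace])
    (by simpa only [finrank_euclideanSpace]) le_rfl
  obtain ⟨U, hU, hUψ⟩ := exists_unitaryGroup_star_mul_mul_apply hψ hf
  refine ⟨U, hU, fun s a => ?_⟩
  calc ∑ t, ∑ i, ‖(star U * K a i * U) (f t) (f s)‖ ^ 2
      = ∑ t, transitionProb (fun i => toEuclideanLin (K a i)) (ψ s) (ψ t) := by
        simp only [hUψ, transitionProb]
    _ ≤ ∑ _t : σ, ((Fintype.card σ : ℝ) ^ 2)⁻¹ := Finset.sum_le_sum fun t _ => hψK a s t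
    _ = (Fintype.card σ : ℝ)⁻¹ := by
        rw [Finset.sum_const, Finset.card_univ, nsmul_eq_mul]
        rcases eq_or_ne (Fintype.card σ : ℝ) 0 with h | h
        · simp [h]
        · field_simp

end Matrices

lemma injective_mk_anc0 (k m : ℕ) :
    Function.Injective fun t : Fin (2 ^ k) => ((t, anc0 m) : CodeIdx k m) :=
  Prod.mk_left_injective _

lemma card_codeIdx {k n : ℕ} (hkn : k ≤ n) : Fintype.card (CodeIdx k (n - k)) = 2 ^ n := by
  rw [Fintype.card_prod, Fintype.card_fin, Fintype.card_fin, ← pow_add, Nat.add_sub_cancel' hkn]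

lemma card_sigma_add_card_mul_le {ι : Type*} [Fintype ι] {κ : ι → Type*} [∀ a, Fintype (κ a)]
    {D M N : ℝ} (hι : Fintype.card ι ≤ M) (hκ : ∀ a, (Fintype.card (κ a) : ℝ) ≤ D) (hN : N ≤ D)
    (hD : 0 ≤ D) :
    2 * (4 * Fintype.card (Σ a, κ a) + 2 * (Fintype.card ι * N) : ℝ) ≤ 12 * (M * D) := by
  have hsigma : (Fintype.card (Σ a, κ a) : ℝ) ≤ Fintype.card ι * D := by
    rw [Fintype.card_sigma, Nat.cast_sum, ← nsmul_eq_mul]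
    exact Finset.sum_le_card_nsmul _ _ _ fun a _ => hκ a
  calc 2 * (4 * Fintype.card (Σ a, κ a) + 2 * (Fintype.card ι * N) : ℝ)
      ≤ 2 * (4 * (Fintype.card ι * D) + 2 * (Fintype.card ι * D)) := by gcongr
    _ = 12 * (Fintype.card ι * D) := by ring
    _ ≤ 12 * (M * D) := by gcongr

theorem tamper_detection_code_general {α δ γ φ : ℝ} (C : ℝ) (hα : 0 ≤ α) (hγ : 0 < γ)
    (hγα : 2 < γ * (1 - 2 * α)) (hγδ : 2 < γ * (δ - α)) (hγφ : 2 < γ * φ) :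
    ∃ k₀ : ℕ, ∀ k : ℕ, k₀ ≤ k → ∀ n : ℕ, (n : ℝ) = γ * k →
      ∀ (ι : Type*) [Fintype ι] (κ : ι → Type*) [∀ a, Fintype (κ a)]
        (K : (a : ι) → κ a → Matrix (CodeIdx k (n - k)) (CodeIdx k (n - k)) ℂ),
        (Fintype.card ι : ℝ) ≤ (2 : ℝ) ^ (((2 : ℝ) ^ n) ^ α) →
        (∀ a, (Fintype.card (κ a) : ℝ) ≤ ((2 : ℝ) ^ n) ^ (1 - δ)) →
        (∀ a, ∑ i, (K a i)ᴴ * K a i = 1) →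
        (∀ a, (∑ i, ‖(K a i).trace‖ ^ 2) / ((2 : ℝ) ^ n) ^ 2 ≤ C * ((2 : ℝ) ^ n) ^ (-φ)) →
        ∃ U ∈ Matrix.unitaryGroup (CodeIdx k (n - k)) ℂ,
          ∀ (s : Fin (2 ^ k)) (a : ι),
            ∑ t : Fin (2 ^ k), ∑ i,
              ‖(star U * K a i * U) (t, anc0 (n - k)) (s, anc0 (n - k))‖ ^ 2 ≤
              ((2 : ℝ) ^ k)⁻¹ := by
  obtain ⟨β, hβ⟩ := exists_eventually_parameters C hα ((div_lt_iff₀' hγ).2 hγα)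
    ((div_lt_iff₀' hγ).2 hγδ) ((div_lt_iff₀' hγ).2 hγφ)
  obtain ⟨k₀, hk₀⟩ := Filter.eventually_atTop.1 <|
    (Filter.eventually_ge_atTop 1).and (eventually_two_pow_of_eventually hβ hγ)
  refine ⟨k₀, fun k hk n hn ι _ κ _ K hι hκ hK htr => ?_⟩
  obtain ⟨hk1, hparam⟩ := hk₀ k hk
  obtain ⟨hexp, htrace, hcard⟩ := hparam n hn
  have hkn : k + 1 ≤ n := by
    have hk1 : (1 : ℝ) ≤ k := by exact_mod_cast hk1
    have hkn : (k : ℝ) < n := by nlinarith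
    exact_mod_cast hkn
  have hcardIdx := card_codeIdx (by omega : k ≤ n)
  have htwo : 2 * 2 ^ k ≤ 2 ^ n := by
    rw [← pow_succ']
    exact Nat.pow_le_pow_right two_pos hkn
  have hκ' (a : ι) : (Fintype.card (κ a) : ℝ) ≤ 2 ^ n := by
    refine (hκ a).trans ((Real.rpow_le_rpow_of_exponent_le ?_ ?_).trans_eq (Real.rpow_one _))
    · exact one_le_pow₀ one_le_two
    · nlinarith
  have hunion := card_sigma_add_card_mul_le hι hκ' (N := (2 ^ k : ℕ))
    (by exact_mod_cast (by omega : 2 ^ k ≤ 2 ^ n)) (by positivity)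
  rw [two_pow_rpow_neg_two_div hγ.ne' hn] at htrace hcard
  simpa using exists_unitaryGroup_sum_norm_sq_le hK (injective_mk_anc0 k (n - k))
    (by rwa [Fintype.card_fin, hcardIdx]) (u := ((2 : ℝ) ^ n) ^ β) (by positivity)
    (by simpa only [Fintype.card_fin] using hunion.trans_lt hexp)
    (fun a => by
      have hfidelity := (div_le_iff₀ (by positivity)).1 (htr a)
      simp only [Fintype.card_fin, hcardIdx, Nat.cast_pow, Nat.cast_ofNat]
      exact htrace.trans' (by gcongr))
    (fun a => by
      simp only [Fintype.card_fin, hcardIdx, Nat.cast_pow, Nat.cast_ofNat]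
      exact hcard.trans' (by gcongr; exact hκ a))

/-- Main theorem: existence of quantum tamper detection codes against CPTP adversaries.
The family of CPTP maps is indexed by a finite type `ι`; the `a`-th map has Kraus operators
`K a i`, `i : Fin (r a)`.  The conclusion states that there is a unitary `U ∈ U(d)`,
`d = 2^n`, such that for every message `s` and every adversary `a`, the probability
`∑_t ⟨ψ_t, Φ_a(|ψ_s⟩⟨ψ_s|) ψ_t⟩ = ∑_t ∑_i |(U* K_i U)_{(t,0),(s,0)}|²` that the decoder
fails to output ⊥ is at most `2^{-k}`. -/
theorem tamper_detection_code (α δ γ : ℝ)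
    (hα : 0 ≤ α) (hαδ : 2 * α < δ) (hδ : δ < 1) (hγ : 2 < γ * (δ / 2 - α)) :
    ∃ k₀ : ℕ, ∀ k : ℕ, k₀ ≤ k → ∀ n : ℕ, (n : ℝ) = γ * k →
      ∀ (ι : Type) [Fintype ι] (r : ι → ℕ)
        (K : (a : ι) → Fin (r a) →
          Matrix (CodeIdx k (n - k)) (CodeIdx k (n - k)) ℂ),
        -- the family is not too large: |F| ≤ 2^{d^α}
        (Fintype.card ι : ℝ) ≤ (2 : ℝ) ^ (((2 : ℝ) ^ n) ^ α) →
        -- each map has Kraus rank at most d^{1-δ}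
        (∀ a, (r a : ℝ) ≤ ((2 : ℝ) ^ n) ^ (1 - δ)) →
        -- each adversary is a CPTP map given via Kraus operators
        (∀ a, ∑ i, (K a i)ᴴ * K a i = 1) →
        -- each map has entanglement fidelity at most 2·d^{-δ/2}
        (∀ a, (∑ i, ‖(K a i).trace‖ ^ 2) / ((2 : ℝ) ^ n) ^ 2 ≤
          2 * ((2 : ℝ) ^ n) ^ (-(δ / 2))) →
        ∃ U ∈ Matrix.unitaryGroup (CodeIdx k (n - k)) ℂ,
          ∀ (s : Fin (2 ^ k)) (a : ι),
            ∑ t : Fin (2 ^ k), ∑ i,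
              ‖(star U * K a i * U) (t, anc0 (n - k)) (s, anc0 (n - k))‖ ^ 2 ≤
              ((2 : ℝ) ^ k)⁻¹ := by
  have hγ0 : 0 < γ := pos_of_mul_pos_left (two_pos.trans hγ) (by linarith)
  obtain ⟨k₀, hk₀⟩ := tamper_detection_code_general (δ := δ) (φ := δ / 2) 2 hα hγ0 (by nlinarith)
    (by nlinarith) (by nlinarith)
  exact ⟨k₀, fun k hk n hn ι _ r K hι hr => hk₀ k hk n hn ι _ K hι (by simpa using hr)⟩

end
end

section
/- (Corollary: tamper detection against unitary adversaries.) Let α, γ be real constants with 0 ≤ α < 1/2 and γ·(1/2 − α) > 2. Then there exists k₀ ∈ ℕ such that for every integer k ≥ k₀ for which n := γ·k is an integer, setting d := 2^n, the following holds: for every finite family F ⊆ U(d) of d×d unitary matrices with |F| ≤ 2^{d^α} such that |Tr V| ≤ √2·d^{3/4} for every V ∈ F, there exists a unitary U ∈ U(d) such that for every s ∈ {0,1}^k and every V ∈ F, ∑_{t∈{0,1}^k} |⟨ψ_t, V ψ_s⟩|² ≤ 2^{−k}, where ψ_m := U(e_m ⊗ e_0). -/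
open Matrix

noncomputable section

/-!
Split the index set `κ × J` into blocks indexed by `J`, where `κ` is an abelian group, and encode
messages by the characters `χ` of `κ`: the code vector `ψ_χ` has the entries `ε (a, j) χ (a + c j)`,
normalised, with independent uniform signs `ε` and shifts `c`. By orthogonality of characters these
vectors are orthonormal for every choice of `ε` and `c`, so they are columns of a unitary matrix.

Up to normalisation, `⟪ψ_χ, V ψ_χ'⟫` is a quadratic form in `ε` whose matrix is `V` with modulated
rows and columns, hence is a contraction if `V` is. Its expectation over `ε` is the trace of that
matrix. For `χ = χ'` this is the trace of `V`, small by assumption; for `χ ≠ χ'` it is a sum over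
the blocks of independent functions of the shifts, each of mean zero. The fluctuation of the
quadratic form is sub-Gaussian by decoupling, as conditioning on some of the signs makes it linear
in the others. The deviation probabilities are doubly exponentially small in `k`, which leaves room
for a union bound over `V`, `χ` and `χ'`.
-/

section

open Finset
open scoped BigOperators ComplexConjugate Matrix.Norms.L2Operator

section Subgaussian

variable {Ω Ω' ι : Type*} [Fintype Ω'] [Fintype Ω]

/-- A complex random variable on a finite set with the uniform distribution is sub-Gaussian with
variance proxy `v` if its moment generating function, taken over all complex directions `z`, is
at most `exp (v ‖z‖² / 2)`. -/
def IsSubgaussian (X : Ω → ℂ) (v : ℝ) : Prop :=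
  ∀ z : ℂ, 𝔼 ω, Real.exp (z * X ω).re ≤ Real.exp (v * ‖z‖ ^ 2 / 2)

theorem IsSubgaussian.mono {X : Ω → ℂ} {v w : ℝ} (hX : IsSubgaussian X v) (hvw : v ≤ w) :
    IsSubgaussian X w := fun z => (hX z).trans (by gcongr)

theorem IsSubgaussian.of_norm_le {Y : Ω → ℂ} {b : ℝ} (hb : ∀ ω, ‖Y ω‖ ≤ b)
    (hmean : 𝔼 ω, Y ω = 0) : IsSubgaussian Y (b ^ 2) := by
  intro z
  cases isEmpty_or_nonempty Ω
  · simpa using (Real.exp_pos _).le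
  set r : ℝ := ‖z‖ * b
  have hr : 0 ≤ r := mul_nonneg (norm_nonneg z) ((norm_nonneg _).trans (hb (Classical.arbitrary Ω)))
  have habs (ω : Ω) : |(z * Y ω).re| ≤ r :=
    (Complex.abs_re_le_norm _).trans <|
      (norm_mul z _).trans_le (mul_le_mul_of_nonneg_left (hb ω) (norm_nonneg z))
  have hchord (ω : Ω) :
      Real.exp (z * Y ω).re ≤ Real.cosh r + (z * Y ω).re / r * Real.sinh r := by
    have hscale : (z * Y ω).re / r * r = (z * Y ω).re :=
      div_mul_cancel_of_imp fun h => abs_nonpos_iff.mp (h ▸ habs ω)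
    have hle : |(z * Y ω).re / r| ≤ 1 := by
      rw [abs_div, abs_of_nonneg hr]
      exact div_le_one_of_le₀ (habs ω) hr
    simpa only [hscale] using Real.exp_mul_le_cosh_add_mul_sinh hle r
  have hmean_re : 𝔼 ω, (z * Y ω).re = 0 := by
    have h := map_expect (Complex.reLm.restrictScalars ℚ≥0) (fun ω => z * Y ω) univ
    simpa [← mul_expect, hmean] using h.symm
  calc 𝔼 ω, Real.exp (z * Y ω).re
      ≤ 𝔼 ω, (Real.cosh r + (z * Y ω).re / r * Real.sinh r) :=
        expect_le_expect fun ω _ => hchord ω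
    _ = Real.cosh r := by
        rw [expect_add_distrib, ← expect_mul, ← expect_div, hmean_re, Fintype.expect_const]
        simp
    _ ≤ Real.exp (b ^ 2 * ‖z‖ ^ 2 / 2) := by
        simpa only [r, mul_pow, mul_comm] using Real.cosh_le_exp_half_sq r

theorem IsSubgaussian.sum_pi {J : Type*} [Fintype J] [DecidableEq J] {Y : J → Ω → ℂ} {v : J → ℝ}
    (hY : ∀ j, IsSubgaussian (Y j) (v j)) :
    IsSubgaussian (fun c : J → Ω => ∑ j, Y j (c j)) (∑ j, v j) := by
  intro z
  have hfactor : 𝔼 c : J → Ω, Real.exp (z * ∑ j, Y j (c j)).re =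
      ∏ j, 𝔼 ω, Real.exp (z * Y j ω).re := by
    simp only [mul_sum, Complex.re_sum, Real.exp_sum, Fintype.expect_eq_sum_div_card,
      prod_div_distrib, prod_univ_sum, Fintype.piFinset_univ, Fintype.card_fun, prod_const,
      card_univ, Nat.cast_pow]
  calc 𝔼 c : J → Ω, Real.exp (z * ∑ j, Y j (c j)).re
      = ∏ j, 𝔼 ω, Real.exp (z * Y j ω).re := hfactor
    _ ≤ ∏ j, Real.exp (v j * ‖z‖ ^ 2 / 2) :=
        prod_le_prod (fun j _ => expect_nonneg fun ω _ => (Real.exp_pos _).le) fun j _ => hY j z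
    _ = Real.exp ((∑ j, v j) * ‖z‖ ^ 2 / 2) := by rw [← Real.exp_sum, sum_mul, sum_div]

theorem exp_expect_le [Nonempty Ω] (Y : Ω → ℝ) :
    Real.exp (𝔼 ω, Y ω) ≤ 𝔼 ω, Real.exp (Y ω) := by
  have h := convexOn_exp.map_sum_le (t := univ) (w := fun _ : Ω => (Fintype.card Ω : ℝ)⁻¹) (p := Y)
    (fun _ _ => by positivity) (by simp) (fun _ _ => Set.mem_univ _)
  simpa only [smul_eq_mul, ← mul_sum, Fintype.expect_eq_sum_div_card, div_eq_inv_mul] using h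

theorem IsSubgaussian.expect [Nonempty Ω'] {X : Ω' → Ω → ℂ} {v : ℝ}
    (hX : ∀ δ, IsSubgaussian (X δ) v) : IsSubgaussian (fun ω => 𝔼 δ, X δ ω) v := by
  intro z
  have hre (ω : Ω) : (z * 𝔼 δ, X δ ω).re = 𝔼 δ, (z * X δ ω).re := by
    rw [mul_expect]
    exact map_expect (Complex.reLm.restrictScalars ℚ≥0) _ _
  calc 𝔼 ω, Real.exp (z * 𝔼 δ, X δ ω).re
      ≤ 𝔼 ω, 𝔼 δ, Real.exp (z * X δ ω).re :=
        expect_le_expect fun ω _ => hre ω ▸ exp_expect_le _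
    _ = 𝔼 δ, 𝔼 ω, Real.exp (z * X δ ω).re := expect_comm ..
    _ ≤ Real.exp (v * ‖z‖ ^ 2 / 2) := expect_le univ_nonempty fun δ _ => hX δ z

theorem expect_mul_right [Group Ω] {M : Type*} [AddCommMonoid M] [Module ℚ≥0 M] (f : Ω → M)
    (g : Ω) : 𝔼 ω, f (ω * g) = 𝔼 ω, f ω :=
  Fintype.expect_equiv (Equiv.mulRight g) _ _ fun _ => rfl

/-- Resampling a part of the randomness, encoded by the translations `r δ`, does not change the law,
so one may condition on the rest. -/
theorem IsSubgaussian.of_forall_mul_right [Group Ω] [Nonempty Ω'] {X : Ω → ℂ} {v : ℝ} (r : Ω' → Ω)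
    (hX : ∀ ω, IsSubgaussian (fun δ => X (ω * r δ)) v) : IsSubgaussian X v := by
  intro z
  calc 𝔼 ω, Real.exp (z * X ω).re
      = 𝔼 δ, 𝔼 ω, Real.exp (z * X (ω * r δ)).re := by
        simp only [expect_mul_right fun ω => Real.exp (z * X ω).re, Fintype.expect_const]
    _ = 𝔼 ω, 𝔼 δ, Real.exp (z * X (ω * r δ)).re := expect_comm ..
    _ ≤ Real.exp (v * ‖z‖ ^ 2 / 2) := expect_le univ_nonempty fun ω _ => hX ω z

theorem norm_lt_sqrt_two_mul_of_re_I_pow_mul_lt {w : ℂ} {u : ℝ}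
    (h : ∀ q : Fin 4, (Complex.I ^ (q : ℕ) * w).re < u) : ‖w‖ < √2 * u := by
  have hre : |w.re| < u := abs_lt.mpr
    ⟨by linarith [show -w.re < u by simpa using h 2], by simpa using h 0⟩
  have him : |w.im| < u := abs_lt.mpr
    ⟨by linarith [show -w.im < u by simpa using h 1], by simpa [pow_succ] using h 3⟩
  calc ‖w‖ ≤ √2 * max |w.re| |w.im| := Complex.norm_le_sqrt_two_mul_max w
    _ < √2 * u := by gcongr; exact max_lt hre him

/-- Chernoff's method and a union bound over the four directions `1, I, -1, -I`. -/
theorem exists_forall_norm_lt_of_isSubgaussian [Nonempty Ω] {S : Finset ι} {X : ι → Ω → ℂ}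
    {u v : ℝ} (hu : 0 ≤ u) (hv : 0 < v) (hX : ∀ i ∈ S, IsSubgaussian (X i) v)
    (hS : 4 * #S < Real.exp (u ^ 2 / (4 * v))) :
    ∃ ω, ∀ i ∈ S, ‖X i ω‖ < u := by
  set a : ℝ := u / √2
  set l : ℝ := a / v
  have ha : a ^ 2 = u ^ 2 / 2 := by rw [div_pow, Real.sq_sqrt zero_le_two]
  set T : Finset (ι × Fin 4) := S ×ˢ univ
  set Φ : ι × Fin 4 → Ω → ℝ := fun p ω => Real.exp (l * Complex.I ^ (p.2 : ℕ) * X p.1 ω).re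
  have hmgf : ∀ p ∈ T, 𝔼 ω, Φ p ω ≤ Real.exp (u ^ 2 / (4 * v)) := by
    intro p hp
    convert hX p.1 (mem_product.mp hp).1 (l * Complex.I ^ (p.2 : ℕ)) using 2
    simp only [norm_mul, Complex.norm_real, norm_pow, Complex.norm_I, one_pow, mul_one,
      Real.norm_eq_abs, sq_abs, l, div_pow, ha]
    field_simp
    ring
  have hpotential : 𝔼 ω, ∑ p ∈ T, Φ p ω < Real.exp (l * a) := by
    calc 𝔼 ω, ∑ p ∈ T, Φ p ω = ∑ p ∈ T, 𝔼 ω, Φ p ω := expect_sum_comm ..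
      _ ≤ #T * Real.exp (u ^ 2 / (4 * v)) := by
          simpa only [sum_const, nsmul_eq_mul] using sum_le_sum hmgf
      _ = 4 * #S * Real.exp (u ^ 2 / (4 * v)) := by
          simp [T, card_product, mul_comm]
      _ < Real.exp (u ^ 2 / (4 * v)) * Real.exp (u ^ 2 / (4 * v)) := by gcongr
      _ = Real.exp (l * a) := by
          rw [← Real.exp_add]
          congr 1
          simp only [l, div_mul_eq_mul_div, ← sq, ha]
          field_simp
          ring
  obtain ⟨ω, -, hω⟩ := exists_lt_of_expect_lt univ_nonempty hpotential
  refine ⟨ω, fun i hi => ?_⟩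
  have hbound : ‖X i ω‖ < √2 * a := by
    refine norm_lt_sqrt_two_mul_of_re_I_pow_mul_lt fun q => ?_
    have hΦ : Φ (i, q) ω < Real.exp (l * a) :=
      (single_le_sum (f := fun p => Φ p ω) (fun p _ => (Real.exp_pos _).le)
        (mem_product.mpr ⟨hi, mem_univ q⟩)).trans_lt hω
    rw [Real.exp_lt_exp, mul_assoc, Complex.re_ofReal_mul] at hΦ
    exact lt_of_mul_lt_mul_left hΦ (by positivity)
  rwa [mul_div_cancel₀ u (by positivity : √2 ≠ 0)] at hbound

end Subgaussian

section OperatorNorm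

theorem sum_norm_mulVec_sq_le {𝕜 m n : Type*} [RCLike 𝕜] [Fintype m] [Fintype n] [DecidableEq n]
    (A : Matrix m n 𝕜) (y : n → 𝕜) :
    ∑ i, ‖(A *ᵥ y) i‖ ^ 2 ≤ ‖A‖ ^ 2 * ∑ j, ‖y j‖ ^ 2 := by
  have h := pow_le_pow_left₀ (norm_nonneg _) (A.l2_opNorm_mulVec (WithLp.toLp 2 y)) 2
  rwa [mul_pow, EuclideanSpace.norm_sq_eq, EuclideanSpace.norm_sq_eq] at h

theorem norm_apply_le_l2_opNorm {𝕜 m n : Type*} [RCLike 𝕜] [Fintype m] [Fintype n]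
    [DecidableEq n] (A : Matrix m n 𝕜) (i : m) (j : n) : ‖A i j‖ ≤ ‖A‖ := by
  have h := (PiLp.norm_apply_le _ i).trans (A.l2_opNorm_mulVec (EuclideanSpace.single j 1))
  simpa using h

theorem norm_le_one_of_mem_unitaryGroup {𝕜 ι : Type*} [RCLike 𝕜] [Fintype ι] [DecidableEq ι]
    [Nonempty ι] {V : Matrix ι ι 𝕜} (hV : V ∈ unitaryGroup ι 𝕜) : ‖V‖ ≤ 1 :=
  (CStarRing.norm_of_mem_unitary hV).le

end OperatorNorm

section SignChaos

variable {ι : Type*} [Fintype ι] [DecidableEq ι]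

theorem expect_eq_zero_of_flip_eq_neg {f : (ι → ℤˣ) → ℂ} (i : ι)
    (hf : ∀ δ, f (δ * Pi.mulSingle i (-1)) = -f δ) : 𝔼 δ, f δ = 0 := by
  have h := expect_mul_right f (Pi.mulSingle i (-1))
  simpa only [hf, expect_neg_distrib, neg_eq_self] using h

theorem expect_one_add_sign_mul_one_sub_sign (i j : ι) :
    𝔼 δ : ι → ℤˣ, (1 + ((δ i : ℤ) : ℂ)) * (1 - ((δ j : ℤ) : ℂ)) = if i = j then 0 else 1 := by
  split_ifs with hij
  · subst hij
    refine expect_eq_zero fun δ _ => ?_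
    rcases Int.units_eq_one_or (δ i) with h | h <;> simp [h]
  · have hi : 𝔼 δ : ι → ℤˣ, ((δ i : ℤ) : ℂ) * (1 - ((δ j : ℤ) : ℂ)) = 0 :=
      expect_eq_zero_of_flip_eq_neg i fun δ => by simp [Ne.symm hij]
    have hj : 𝔼 δ : ι → ℤˣ, ((δ j : ℤ) : ℂ) = 0 :=
      expect_eq_zero_of_flip_eq_neg j fun δ => by simp
    simp only [add_mul, one_mul, expect_add_distrib, expect_sub_distrib, hi, hj,
      Fintype.expect_const, sub_zero, add_zero]

theorem isSubgaussian_sum_sign_mul (a : ι → ℂ) :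
    IsSubgaussian (fun e : ι → ℤˣ => ∑ i, ((e i : ℤ) : ℂ) * a i) (∑ i, ‖a i‖ ^ 2) := by
  refine IsSubgaussian.sum_pi (Y := fun i (s : ℤˣ) => ((s : ℤ) : ℂ) * a i) fun i =>
    .of_norm_le (fun s => ?_) ?_
  · rcases Int.units_eq_one_or s with rfl | rfl <;> simp
  · rw [Fintype.expect_eq_sum_div_card, UnitsInt.univ]
    simp

theorem norm_one_add_sign_mul_sign_le (s t : ℤˣ) :
    ‖(1 + ((s : ℤ) : ℂ)) * ((t : ℤ) : ℂ)‖ ≤ 2 := by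
  rcases Int.units_eq_one_or s with rfl | rfl <;> rcases Int.units_eq_one_or t with rfl | rfl <;>
    norm_num

theorem norm_one_sub_sign_mul_sign_le (s t : ℤˣ) :
    ‖(1 - ((s : ℤ) : ℂ)) * ((t : ℤ) : ℂ)‖ ≤ 2 := by
  simpa [sub_eq_add_neg] using norm_one_add_sign_mul_sign_le (-s) t

/-- Conditionally on the signs `e i` with `δ i = -1`, the form is linear in the other signs. -/
theorem isSubgaussian_decoupled_signChaos (A : Matrix ι ι ℂ) (δ : ι → ℤˣ) :
    IsSubgaussian (fun e : ι → ℤˣ => ∑ i, ∑ j, (1 + ((δ i : ℤ) : ℂ)) * (1 - ((δ j : ℤ) : ℂ)) *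
      (((e i : ℤ) : ℂ) * ((e j : ℤ) : ℂ) * A i j)) (16 * ‖A‖ ^ 2 * Fintype.card ι) := by
  refine .of_forall_mul_right (Ω' := ι → ℤˣ) (fun f i => if δ i = 1 then f i else 1) fun e => ?_
  set y : ι → ℂ := fun j => (1 - ((δ j : ℤ) : ℂ)) * ((e j : ℤ) : ℂ)
  set a : ι → ℂ := fun i => (1 + ((δ i : ℤ) : ℂ)) * ((e i : ℤ) : ℂ) * (A *ᵥ y) i
  have hlinear (f : ι → ℤˣ) : ∑ i, ∑ j, (1 + ((δ i : ℤ) : ℂ)) * (1 - ((δ j : ℤ) : ℂ)) *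
      ((((e * fun i => if δ i = 1 then f i else 1) i : ℤ) : ℂ) *
        (((e * fun i => if δ i = 1 then f i else 1) j : ℤ) : ℂ) * A i j) =
      ∑ i, ((f i : ℤ) : ℂ) * a i := by
    refine sum_congr rfl fun i _ => ?_
    simp only [a, y, mulVec, dotProduct, mul_sum]
    refine sum_congr rfl fun j _ => ?_
    rcases Int.units_eq_one_or (δ i) with hi | hi <;>
      rcases Int.units_eq_one_or (δ j) with hj | hj <;> simp [hi, hj]
    ring
  have hy : ∑ j, ‖y j‖ ^ 2 ≤ 4 * Fintype.card ι := by
    calc ∑ j, ‖y j‖ ^ 2 ≤ ∑ _j : ι, (2 : ℝ) ^ 2 := by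
          gcongr; exact norm_one_sub_sign_mul_sign_le _ _
      _ = 4 * Fintype.card ι := by simp; ring
  have ha : ∑ i, ‖a i‖ ^ 2 ≤ 16 * ‖A‖ ^ 2 * Fintype.card ι := by
    calc ∑ i, ‖a i‖ ^ 2 ≤ ∑ i, 2 ^ 2 * ‖(A *ᵥ y) i‖ ^ 2 := by
          simp only [a, norm_mul _ ((A *ᵥ y) _), mul_pow]
          gcongr; exact norm_one_add_sign_mul_sign_le _ _
      _ = 4 * ∑ i, ‖(A *ᵥ y) i‖ ^ 2 := by rw [mul_sum]; norm_num
      _ ≤ 4 * (‖A‖ ^ 2 * (4 * Fintype.card ι)) := by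
          gcongr; exact (sum_norm_mulVec_sq_le A y).trans (by gcongr)
      _ = 16 * ‖A‖ ^ 2 * Fintype.card ι := by ring
  simpa only [hlinear] using (isSubgaussian_sum_sign_mul a).mono ha

/-- The homogeneous Rademacher chaos of degree two with coefficients `A`: the quadratic form of `A`
at the signs `e`. -/
def signChaos (A : Matrix ι ι ℂ) (e : ι → ℤˣ) : ℂ :=
  ∑ i, ∑ j, ((e i : ℤ) : ℂ) * ((e j : ℤ) : ℂ) * A i j

/-- Averaging `(1 + δ i) (1 - δ j)` over random signs `δ` gives `1` off the diagonal and `0` on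
it, so the average of the decoupled forms is the quadratic form without its diagonal. -/
theorem isSubgaussian_signChaos (A : Matrix ι ι ℂ) :
    IsSubgaussian (fun e => signChaos A e - A.trace) (16 * ‖A‖ ^ 2 * Fintype.card ι) := by
  have hdecouple (e : ι → ℤˣ) :
      𝔼 δ : ι → ℤˣ, ∑ i, ∑ j, (1 + ((δ i : ℤ) : ℂ)) * (1 - ((δ j : ℤ) : ℂ)) *
        (((e i : ℤ) : ℂ) * ((e j : ℤ) : ℂ) * A i j) =
      signChaos A e - A.trace := by
    have hentry (i j : ι) :
        (if i = j then 0 else 1) * (((e i : ℤ) : ℂ) * ((e j : ℤ) : ℂ) * A i j) =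
          ((e i : ℤ) : ℂ) * ((e j : ℤ) : ℂ) * A i j - if i = j then A i j else 0 := by
      split_ifs with hij
      · rcases Int.units_eq_one_or (e j) with h | h <;> simp [hij, h]
      · simp
    simp only [expect_sum_comm, ← expect_mul, expect_one_add_sign_mul_one_sub_sign, hentry,
      sum_sub_distrib, sum_ite_eq, mem_univ, if_true, signChaos, trace, diag_apply]
  simpa only [hdecouple] using IsSubgaussian.expect (isSubgaussian_decoupled_signChaos A)

end SignChaos

section ModulatedSigns

variable {κ J : Type*} [AddCommGroup κ]

/-- The phases `χ (a + c j)` of the character `χ`, shifted by `c j` on the block `j`. -/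
def shiftedPhase (c : J → κ) (χ : AddChar κ ℂ) (x : κ × J) : ℂ := χ (x.1 + c x.2)

theorem conj_shiftedPhase_mul [Finite κ] (c : J → κ) (χ χ' : AddChar κ ℂ) (x : κ × J) :
    conj (shiftedPhase c χ x) * shiftedPhase c χ' x = (χ' - χ) (x.1 + c x.2) := by
  rw [AddChar.sub_apply, AddChar.map_neg_eq_conj, mul_comm, shiftedPhase, shiftedPhase]

variable [Fintype κ] [Fintype J]

theorem isSubgaussian_sum_addChar_shift [DecidableEq J] {ψ : AddChar κ ℂ} (hψ : ψ ≠ 0)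
    {w : κ × J → ℂ} (hw : ∀ x, ‖w x‖ ≤ 1) :
    IsSubgaussian (fun c : J → κ => ∑ x, ψ (x.1 + c x.2) * w x)
      (Fintype.card J * Fintype.card κ ^ 2) := by
  have hcolumn (j : J) : IsSubgaussian (fun c : κ => ∑ a, ψ (a + c) * w (a, j))
      ((Fintype.card κ : ℝ) ^ 2) := by
    refine .of_norm_le (fun c => ?_) ?_
    · calc ‖∑ a, ψ (a + c) * w (a, j)‖ ≤ ∑ _a : κ, (1 : ℝ) :=
            norm_sum_le_of_le _ fun a _ => by simpa using hw (a, j)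
        _ = Fintype.card κ := by simp
    · simp only [AddChar.map_add_eq_mul, mul_right_comm, ← sum_mul, ← mul_expect,
        AddChar.expect_eq_zero_iff_ne_zero.mpr hψ, mul_zero]
  simpa only [Fintype.sum_prod_type_right, sum_const, card_univ, nsmul_eq_mul] using
    IsSubgaussian.sum_pi hcolumn

/-- The code vector attached to the character `χ`: the random signs `ε` modulated by the phases of
`χ`, normalised to a unit vector. -/
def modulatedSigns (ε : κ × J → ℤˣ) (c : J → κ) (χ : AddChar κ ℂ) : EuclideanSpace ℂ (κ × J) :=
  WithLp.toLp 2 fun x =>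
    ((√(Fintype.card (κ × J)) : ℝ) : ℂ)⁻¹ * ((ε x : ℤ) : ℂ) * shiftedPhase c χ x

theorem sum_addChar_shift (c : J → κ) {ψ : AddChar κ ℂ} (hψ : ψ ≠ 0) :
    ∑ x : κ × J, ψ (x.1 + c x.2) = 0 := by
  simp only [Fintype.sum_prod_type_right, AddChar.map_add_eq_mul, ← sum_mul,
    AddChar.sum_eq_zero_iff_ne_zero.mpr hψ, zero_mul, sum_const_zero]

theorem conj_modulatedSigns_mul (ε : κ × J → ℤˣ) (c : J → κ) (χ χ' : AddChar κ ℂ)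
    (x y : κ × J) :
    conj (modulatedSigns ε c χ x) * modulatedSigns ε c χ' y =
      (Fintype.card (κ × J) : ℂ)⁻¹ * (((ε x : ℤ) : ℂ) * ((ε y : ℤ) : ℂ) *
        (conj (shiftedPhase c χ x) * shiftedPhase c χ' y)) := by
  have hnormal : ((√(Fintype.card (κ × J)) : ℝ) : ℂ)⁻¹ * ((√(Fintype.card (κ × J)) : ℝ) : ℂ)⁻¹ =
      (Fintype.card (κ × J) : ℂ)⁻¹ := by
    rw [← mul_inv, ← Complex.ofReal_mul, Real.mul_self_sqrt (Nat.cast_nonneg _),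
      Complex.ofReal_natCast]
  simp only [modulatedSigns, ← hnormal, map_mul, map_inv₀, Complex.conj_ofReal, map_intCast]
  ring

theorem orthonormal_modulatedSigns [Nonempty J] (ε : κ × J → ℤˣ) (c : J → κ) :
    Orthonormal ℂ (modulatedSigns ε c) := by
  classical
  rw [orthonormal_iff_ite]
  intro χ χ'
  have hterm (x : κ × J) : conj (modulatedSigns ε c χ x) * modulatedSigns ε c χ' x =
      (Fintype.card (κ × J) : ℂ)⁻¹ * (χ' - χ) (x.1 + c x.2) := by
    rw [conj_modulatedSigns_mul, conj_shiftedPhase_mul]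
    rcases Int.units_eq_one_or (ε x) with h | h <;> simp [h]
  simp only [PiLp.inner_apply, RCLike.inner_apply', hterm, ← mul_sum]
  split_ifs with h
  · rw [h, sub_self]
    simp only [AddChar.zero_apply, sum_const, card_univ, nsmul_eq_mul, mul_one]
    exact inv_mul_cancel₀ (Nat.cast_ne_zero.mpr Fintype.card_ne_zero)
  · rw [sum_addChar_shift c (sub_ne_zero.mpr (Ne.symm h)), mul_zero]

variable [DecidableEq κ] [DecidableEq J]

/-- The matrix whose quadratic form in the signs is `⟪ψ_χ, V ψ_χ'⟫` up to normalisation, where `ψ`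
is `modulatedSigns`. -/
def modulate (c : J → κ) (χ χ' : AddChar κ ℂ) (V : Matrix (κ × J) (κ × J) ℂ) :
    Matrix (κ × J) (κ × J) ℂ :=
  diagonal (star (shiftedPhase c χ)) * V * diagonal (shiftedPhase c χ')

theorem norm_modulate_le (c : J → κ) (χ χ' : AddChar κ ℂ) (V : Matrix (κ × J) (κ × J) ℂ) :
    ‖modulate c χ χ' V‖ ≤ ‖V‖ := by
  have hphase (χ : AddChar κ ℂ) : ‖shiftedPhase c χ‖ ≤ 1 :=
    (pi_norm_le_iff_of_nonneg zero_le_one).mpr fun x => (AddChar.norm_apply χ _).le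
  calc ‖modulate c χ χ' V‖ ≤ ‖star (shiftedPhase c χ)‖ * ‖V‖ * ‖shiftedPhase c χ'‖ := by
        simpa only [modulate, l2_opNorm_diagonal] using
          norm_mul₃_le (a := diagonal (star (shiftedPhase c χ))) (b := V)
            (c := diagonal (shiftedPhase c χ'))
    _ ≤ 1 * ‖V‖ * 1 := by
        rw [norm_star]
        gcongr <;> exact hphase _
    _ = ‖V‖ := by ring

theorem trace_modulate (c : J → κ) (χ χ' : AddChar κ ℂ) (V : Matrix (κ × J) (κ × J) ℂ) :
    (modulate c χ χ' V).trace = ∑ x, (χ' - χ) (x.1 + c x.2) * V x x := by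
  refine sum_congr rfl fun x _ => ?_
  rw [← conj_shiftedPhase_mul, diag_apply, modulate, mul_diagonal, diagonal_mul, Pi.star_apply,
    RCLike.star_def, mul_right_comm]

theorem star_modulatedSigns_dotProduct_mulVec (ε : κ × J → ℤˣ) (c : J → κ) (χ χ' : AddChar κ ℂ)
    (V : Matrix (κ × J) (κ × J) ℂ) :
    star (modulatedSigns ε c χ).ofLp ⬝ᵥ V *ᵥ (modulatedSigns ε c χ').ofLp =
      (Fintype.card (κ × J) : ℂ)⁻¹ * signChaos (modulate c χ χ' V) ε := by
  have hentry (x y : κ × J) :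
      conj (modulatedSigns ε c χ x) * (V x y * modulatedSigns ε c χ' y) =
        (Fintype.card (κ × J) : ℂ)⁻¹ *
          (((ε x : ℤ) : ℂ) * ((ε y : ℤ) : ℂ) * modulate c χ χ' V x y) := by
    rw [mul_left_comm, conj_modulatedSigns_mul, modulate, mul_diagonal, diagonal_mul,
      Pi.star_apply, RCLike.star_def]
    ring
  simp only [signChaos, dotProduct, mulVec, Pi.star_apply, RCLike.star_def, mul_sum, hentry]

/-- On the diagonal the trace of `modulate c χ χ V` is that of `V`, so only the pairs `χ ≠ χ'`
need random shifts. -/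
theorem exists_shift_forall_norm_trace_modulate_le [Nonempty J]
    {F : Finset (Matrix (κ × J) (κ × J) ℂ)} (hF : ∀ V ∈ F, ‖V‖ ≤ 1)
    (htr : ∀ V ∈ F, ‖V.trace‖ ≤ Fintype.card J / 2)
    (hcard : 4 * (#F * Fintype.card κ) <
      Real.exp (Fintype.card J / (16 * Fintype.card κ ^ 2))) :
    ∃ c : J → κ, ∀ V ∈ F, ∀ χ χ', ‖(modulate c χ χ' V).trace‖ ≤ Fintype.card J / 2 := by
  set S : Finset (Matrix (κ × J) (κ × J) ℂ × AddChar κ ℂ) := F ×ˢ univ.erase 0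
  have hS : (#S : ℝ) ≤ #F * Fintype.card κ := by
    rw [← AddChar.card_eq, card_product]
    exact_mod_cast Nat.mul_le_mul_left _ (card_le_univ _)
  have hexp : ((Fintype.card J : ℝ) / 2) ^ 2 / (4 * (Fintype.card J * Fintype.card κ ^ 2)) =
      Fintype.card J / (16 * Fintype.card κ ^ 2) := by
    field_simp
    norm_num
  obtain ⟨c, hc⟩ := exists_forall_norm_lt_of_isSubgaussian (S := S)
    (X := fun p (c : J → κ) => ∑ x, p.2 (x.1 + c x.2) * p.1 x x)
    (u := Fintype.card J / 2) (v := Fintype.card J * Fintype.card κ ^ 2) (by positivity)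
    (by positivity)
    (fun p hp => isSubgaussian_sum_addChar_shift (ne_of_mem_erase (mem_product.mp hp).2)
      fun x => (norm_apply_le_l2_opNorm _ x x).trans (hF _ (mem_product.mp hp).1))
    (by rw [hexp]; exact lt_of_le_of_lt (by gcongr) hcard)
  refine ⟨c, fun V hV χ χ' => ?_⟩
  rw [trace_modulate]
  obtain rfl | hne := eq_or_ne χ χ'
  · simpa [trace] using htr V hV
  · exact (hc (V, χ' - χ) (mem_product.mpr
      ⟨hV, mem_erase.mpr ⟨sub_ne_zero.mpr hne.symm, mem_univ _⟩⟩)).le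

theorem exists_signs_forall_norm_sub_trace_modulate_lt [Nonempty J]
    {F : Finset (Matrix (κ × J) (κ × J) ℂ)} (hF : ∀ V ∈ F, ‖V‖ ≤ 1) (c : J → κ)
    (hcard : 4 * (#F * Fintype.card κ ^ 2) <
      Real.exp (Fintype.card J / (256 * Fintype.card κ))) :
    ∃ ε : κ × J → ℤˣ, ∀ V ∈ F, ∀ χ χ',
      ‖signChaos (modulate c χ χ' V) ε - (modulate c χ χ' V).trace‖ < Fintype.card J / 2 := by
  set S : Finset (Matrix (κ × J) (κ × J) ℂ × AddChar κ ℂ × AddChar κ ℂ) := F ×ˢ univ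
  have hS : (#S : ℝ) = #F * Fintype.card κ ^ 2 := by
    simp [S, card_product, AddChar.card_eq, sq]
  have hexp : ((Fintype.card J : ℝ) / 2) ^ 2 / (4 * (16 * Fintype.card (κ × J))) =
      Fintype.card J / (256 * Fintype.card κ) := by
    rw [Fintype.card_prod, Nat.cast_mul]
    field_simp
    norm_num
  have hnorm : ∀ p ∈ S, 16 * ‖modulate c p.2.1 p.2.2 p.1‖ ^ 2 * Fintype.card (κ × J) ≤
      16 * Fintype.card (κ × J) := fun p hp => by
    have h : ‖modulate c p.2.1 p.2.2 p.1‖ ≤ 1 :=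
      (norm_modulate_le ..).trans (hF _ (mem_product.mp hp).1)
    gcongr
    exact mul_le_of_le_one_right (by norm_num) (pow_le_one₀ (norm_nonneg _) h)
  obtain ⟨ε, hε⟩ := exists_forall_norm_lt_of_isSubgaussian (S := S)
    (X := fun p ε => signChaos (modulate c p.2.1 p.2.2 p.1) ε - (modulate c p.2.1 p.2.2 p.1).trace)
    (u := Fintype.card J / 2) (v := 16 * Fintype.card (κ × J)) (by positivity) (by positivity)
    (fun p hp => (isSubgaussian_signChaos _).mono (hnorm p hp)) (by rwa [hS, hexp])
  exact ⟨ε, fun V hV χ χ' => hε (V, χ, χ') (mem_product.mpr ⟨hV, mem_univ _⟩)⟩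

theorem exists_modulatedSigns_forall_norm_le [Nonempty J]
    {F : Finset (Matrix (κ × J) (κ × J) ℂ)} (hF : ∀ V ∈ F, ‖V‖ ≤ 1)
    (htr : ∀ V ∈ F, ‖V.trace‖ ≤ Fintype.card J / 2)
    (hcard : 4 * (#F * Fintype.card κ ^ 2) <
      Real.exp (Fintype.card J / (256 * Fintype.card κ ^ 2))) :
    ∃ ε c, ∀ V ∈ F, ∀ χ χ' : AddChar κ ℂ,
      ‖star (modulatedSigns ε c χ).ofLp ⬝ᵥ V *ᵥ (modulatedSigns ε c χ').ofLp‖ ≤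
        (Fintype.card κ : ℝ)⁻¹ := by
  have hκ : (1 : ℝ) ≤ Fintype.card κ := by exact_mod_cast Fintype.card_pos
  have hκ_sq : (Fintype.card κ : ℝ) ≤ Fintype.card κ ^ 2 := le_self_pow₀ hκ two_ne_zero
  obtain ⟨c, hc⟩ := exists_shift_forall_norm_trace_modulate_le hF htr <| by
    calc 4 * (#F * (Fintype.card κ : ℝ)) ≤ 4 * (#F * Fintype.card κ ^ 2) := by gcongr
      _ < _ := hcard
      _ ≤ _ := by gcongr; norm_num
  obtain ⟨ε, hε⟩ := exists_signs_forall_norm_sub_trace_modulate_lt hF c <|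
    hcard.trans_le (by gcongr)
  refine ⟨ε, c, fun V hV χ χ' => ?_⟩
  set Q : ℂ := signChaos (modulate c χ χ' V) ε
  have hQ : ‖Q‖ ≤ Fintype.card J := by
    linarith [norm_le_norm_sub_add Q (modulate c χ χ' V).trace, hc V hV χ χ',
      hε V hV χ χ']
  calc ‖star (modulatedSigns ε c χ).ofLp ⬝ᵥ V *ᵥ (modulatedSigns ε c χ').ofLp‖
      = (Fintype.card κ * Fintype.card J : ℝ)⁻¹ * ‖Q‖ := by
        rw [star_modulatedSigns_dotProduct_mulVec, norm_mul, norm_inv, Complex.norm_natCast,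
          Fintype.card_prod, Nat.cast_mul]
    _ ≤ (Fintype.card κ * Fintype.card J : ℝ)⁻¹ * Fintype.card J := by gcongr
    _ = (Fintype.card κ : ℝ)⁻¹ := by field_simp

end ModulatedSigns

section Encoding

theorem exists_mem_unitaryGroup_col_eq_of_orthonormal {𝕜 ι τ : Type*} [RCLike 𝕜] [Fintype ι]
    [DecidableEq ι] {v : τ → EuclideanSpace 𝕜 ι} (hv : Orthonormal 𝕜 v) (f : τ ↪ ι) :
    ∃ U ∈ unitaryGroup ι 𝕜, ∀ t x, U x (f t) = v t x := by
  have hextend : Orthonormal 𝕜 ((Set.range f).domRestrict (Function.extend f v 0)) := by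
    convert hv.comp _ (Equiv.ofInjective f f.injective).symm.injective using 1
    ext ⟨_, t, rfl⟩
    simp [f.injective.extend_apply, Equiv.ofInjective_symm_apply]
  obtain ⟨b, hb⟩ := hextend.exists_orthonormalBasis_extension_of_card_eq finrank_euclideanSpace
  refine ⟨(EuclideanSpace.basisFun ι 𝕜).toBasis.toMatrix b,
    (EuclideanSpace.basisFun ι 𝕜).toMatrix_orthonormalBasis_mem_unitary b, fun t x => ?_⟩
  have hbt : b (f t) = v t := by rw [hb _ ⟨t, rfl⟩, f.injective.extend_apply]
  rw [Module.Basis.toMatrix_apply, hbt]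
  simp

theorem star_mul_mul_apply {R ι : Type*} [Semiring R] [StarRing R] [Fintype ι]
    (U V : Matrix ι ι R) (i j : ι) :
    (star U * V * U) i j = star (fun x => U x i) ⬝ᵥ V *ᵥ fun x => U x j := by
  rw [Matrix.mul_assoc, mul_apply_eq_vecMul, star_eq_conjTranspose]
  rfl

theorem exists_unitary_forall_norm_apply_le {κ J : Type*} [AddCommGroup κ] [Fintype κ]
    [DecidableEq κ] [Fintype J] [DecidableEq J] (j : J) {F : Finset (Matrix (κ × J) (κ × J) ℂ)}
    (hF : ∀ V ∈ F, ‖V‖ ≤ 1) (htr : ∀ V ∈ F, ‖V.trace‖ ≤ Fintype.card J / 2)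
    (hcard : 4 * (#F * Fintype.card κ ^ 2) <
      Real.exp (Fintype.card J / (256 * Fintype.card κ ^ 2))) :
    ∃ U ∈ unitaryGroup (κ × J) ℂ, ∀ V ∈ F, ∀ s t,
      ‖(star U * V * U) (t, j) (s, j)‖ ≤ (Fintype.card κ : ℝ)⁻¹ := by
  have : Nonempty J := ⟨j⟩
  obtain ⟨ε, c, h⟩ := exists_modulatedSigns_forall_norm_le hF htr hcard
  set χ : κ ≃ AddChar κ ℂ := Fintype.equivOfCardEq AddChar.card_eq.symm
  obtain ⟨U, hU, hcol⟩ := exists_mem_unitaryGroup_col_eq_of_orthonormal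
    ((orthonormal_modulatedSigns ε c).comp χ χ.injective) (.sectL κ j)
  refine ⟨U, hU, fun V hV s t => ?_⟩
  have hcol' (s : κ) : (fun x => U x (s, j)) = (modulatedSigns ε c (χ s)).ofLp := funext (hcol s)
  rw [star_mul_mul_apply, hcol', hcol']
  exact h V hV (χ t) (χ s)

end Encoding

section Asymptotics

open Filter Asymptotics

theorem eventually_add_mul_add_pow_le (a b : ℝ) {c q r : ℝ} (hc : 0 < c) (hq : 0 ≤ q)
    (hqr : q < r) (hr : 1 < r) : ∀ᶠ k : ℕ in atTop, a + b * k + q ^ k ≤ c * r ^ k := by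
  have hconst : (fun _ : ℕ => a) =o[atTop] fun k => r ^ k := by
    simpa using (isLittleO_pow_pow_of_lt_left zero_le_one hr).const_mul_left a
  have hlinear : (fun k : ℕ => b * k) =o[atTop] fun k => r ^ k :=
    (isLittleO_coe_const_pow_of_one_lt hr).const_mul_left b
  filter_upwards [((hconst.add hlinear).add (isLittleO_pow_pow_of_lt_left hq hqr)).bound hc]
    with k hk
  rw [Real.norm_of_nonneg (pow_nonneg (by positivity : 0 ≤ r) k)] at hk
  exact (Real.le_norm_self _).trans hk

theorem two_rpow_lt_exp {x : ℝ} (hx : 0 < x) : (2 : ℝ) ^ x < Real.exp x := by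
  rw [Real.rpow_def_of_pos two_pos, Real.exp_lt_exp]
  exact mul_lt_of_lt_one_left hx (Real.log_two_lt_d9.trans (by norm_num))

theorem eventually_family_card_lt_exp {δ γ : ℝ} (hγ : 3 < γ) (hδ : δ < γ - 3) :
    ∀ᶠ k : ℕ in atTop, 4 * ((2 : ℝ) ^ ((2 : ℝ) ^ δ) ^ k * ((2 : ℝ) ^ k) ^ 2) <
      Real.exp (((2 : ℝ) ^ (γ - 1)) ^ k / (256 * ((2 : ℝ) ^ k) ^ 2)) := by
  filter_upwards [eventually_add_mul_add_pow_le 2 2 (c := 1 / 256) (by norm_num)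
    (Real.rpow_nonneg zero_le_two δ) (Real.rpow_lt_rpow_of_exponent_lt one_lt_two hδ)
    (Real.one_lt_rpow one_lt_two (by linarith : 0 < γ - 3))] with k hk
  have hexponent : ((2 : ℝ) ^ (γ - 1)) ^ k / (256 * ((2 : ℝ) ^ k) ^ 2) =
      1 / 256 * ((2 : ℝ) ^ (γ - 3)) ^ k := by
    have hsplit : (2 : ℝ) ^ (γ - 1) = (2 : ℝ) ^ (γ - 3) * 2 ^ 2 := by
      rw [← Real.rpow_two, ← Real.rpow_add two_pos, sub_add]
      norm_num
    rw [hsplit, mul_pow, pow_right_comm]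
    field_simp
  calc 4 * ((2 : ℝ) ^ ((2 : ℝ) ^ δ) ^ k * ((2 : ℝ) ^ k) ^ 2)
      = 2 ^ (2 + 2 * k + ((2 : ℝ) ^ δ) ^ k) := by
        rw [Real.rpow_add two_pos, Real.rpow_add two_pos, Real.rpow_two, mul_comm (2 : ℝ) k,
          Real.rpow_mul zero_le_two, Real.rpow_natCast, Real.rpow_two]
        ring
    _ < Real.exp (2 + 2 * k + ((2 : ℝ) ^ δ) ^ k) := two_rpow_lt_exp (by positivity)
    _ ≤ Real.exp (((2 : ℝ) ^ (γ - 1)) ^ k / (256 * ((2 : ℝ) ^ k) ^ 2)) := by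
        rwa [hexponent, Real.exp_le_exp]

theorem eventually_trace_bound_le {γ : ℝ} (hγ : 4 < γ) :
    ∀ᶠ k : ℕ in atTop, √2 * (((2 : ℝ) ^ γ) ^ k) ^ (3 / 4 : ℝ) ≤ ((2 : ℝ) ^ (γ - 1)) ^ k / 2 := by
  have hr : 1 < (2 : ℝ) ^ (γ / 4 - 1) := Real.one_lt_rpow one_lt_two (by linarith)
  filter_upwards [(tendsto_pow_atTop_atTop_of_one_lt hr).eventually_ge_atTop (2 * √2)] with k hk
  have hsplit : ((2 : ℝ) ^ (γ - 1)) ^ k =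
      ((2 : ℝ) ^ (γ / 4 - 1)) ^ k * (((2 : ℝ) ^ γ) ^ k) ^ (3 / 4 : ℝ) := by
    simp only [← Real.rpow_mul_natCast zero_le_two, ← Real.rpow_mul zero_le_two,
      ← Real.rpow_add two_pos]
    ring_nf
  rw [hsplit, le_div_iff₀ two_pos, mul_right_comm, mul_comm √2]
  gcongr

theorem pow_eq_rpow_pow_of_cast_eq_mul {b x : ℝ} (hb : 0 ≤ b) {n k : ℕ} (h : (n : ℝ) = x * k) :
    b ^ n = (b ^ x) ^ k := by
  rw [← Real.rpow_mul_natCast hb, ← h, Real.rpow_natCast]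

end Asymptotics

theorem tamper_detection_unitary_general (α γ : ℝ) (hγ : 4 < γ) (hα : 3 < γ * (1 - α)) :
    ∃ k₀ : ℕ, ∀ k : ℕ, k₀ ≤ k → ∀ n : ℕ, (n : ℝ) = γ * k →
      ∀ F : Finset (Matrix (CodeIdx k (n - k)) (CodeIdx k (n - k)) ℂ),
        (∀ V ∈ F, ‖V‖ ≤ 1) →
        (F.card : ℝ) ≤ (2 : ℝ) ^ (((2 : ℝ) ^ n) ^ α) →
        (∀ V ∈ F, ‖V.trace‖ ≤ Real.sqrt 2 * ((2 : ℝ) ^ n) ^ ((3 : ℝ) / 4)) →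
        ∃ U ∈ Matrix.unitaryGroup (CodeIdx k (n - k)) ℂ,
          ∀ s : Fin (2 ^ k), ∀ V ∈ F,
            ∑ t : Fin (2 ^ k),
              ‖(star U * V * U) (t, anc0 (n - k)) (s, anc0 (n - k))‖ ^ 2 ≤
              ((2 : ℝ) ^ k)⁻¹ := by
  refine Filter.eventually_atTop.mp ?_
  filter_upwards [eventually_family_card_lt_exp (δ := γ * α) (γ := γ) (by linarith) (by linarith),
    eventually_trace_bound_le hγ] with k hcount htrace n hn F hF hcard htr
  have hkn : k ≤ n := by
    have h : (k : ℝ) ≤ n := hn ▸ le_mul_of_one_le_left k.cast_nonneg (by linarith)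
    exact_mod_cast h
  have hd : (2 : ℝ) ^ n = ((2 : ℝ) ^ γ) ^ k := pow_eq_rpow_pow_of_cast_eq_mul zero_le_two hn
  have hdα : ((2 : ℝ) ^ n) ^ α = ((2 : ℝ) ^ (γ * α)) ^ k := by
    rw [hd, ← Real.rpow_pow_comm (by positivity), Real.rpow_mul zero_le_two]
  have hM : (2 : ℝ) ^ (n - k) = ((2 : ℝ) ^ (γ - 1)) ^ k :=
    pow_eq_rpow_pow_of_cast_eq_mul zero_le_two (by rw [Nat.cast_sub hkn, hn, sub_one_mul])
  obtain ⟨U, hU, hentry⟩ := exists_unitary_forall_norm_apply_le (anc0 (n - k)) hF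
    (fun V hV => (htr V hV).trans (by simpa [hd, hM] using htrace)) <| by
      simp only [Fintype.card_fin, Nat.cast_pow, Nat.cast_ofNat, hM]
      exact lt_of_le_of_lt (by rw [← hdα]; gcongr) hcount
  refine ⟨U, hU, fun s V hV => ?_⟩
  calc ∑ t : Fin (2 ^ k), ‖(star U * V * U) (t, anc0 (n - k)) (s, anc0 (n - k))‖ ^ 2
      ≤ ∑ _t : Fin (2 ^ k), ((2 : ℝ) ^ k)⁻¹ ^ 2 := by
        gcongr with t
        simpa using hentry V hV s t
    _ = ((2 : ℝ) ^ k)⁻¹ := by simp [sq]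

end

/-- Corollary: tamper detection against unitary adversaries.  For each unitary `V` in the
family, tampering by `ρ ↦ VρV*` makes the decoder fail to output ⊥ on input message `s`
with probability `∑_t |⟨ψ_t, V ψ_s⟩|² = ∑_t |(U* V U)_{(t,0),(s,0)}|²`. -/
theorem tamper_detection_unitary (α γ : ℝ)
    (hα0 : 0 ≤ α) (hα : α < 1 / 2) (hγ : 2 < γ * (1 / 2 - α)) :
    ∃ k₀ : ℕ, ∀ k : ℕ, k₀ ≤ k → ∀ n : ℕ, (n : ℝ) = γ * k →
      ∀ F : Finset (Matrix (CodeIdx k (n - k)) (CodeIdx k (n - k)) ℂ),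
        -- the family consists of unitary matrices
        (∀ V ∈ F, V ∈ Matrix.unitaryGroup (CodeIdx k (n - k)) ℂ) →
        -- the family is not too large: |F| ≤ 2^{d^α}
        (F.card : ℝ) ≤ (2 : ℝ) ^ (((2 : ℝ) ^ n) ^ α) →
        -- trace bound: |Tr V| ≤ √2·d^{3/4}
        (∀ V ∈ F, ‖V.trace‖ ≤ Real.sqrt 2 * ((2 : ℝ) ^ n) ^ ((3 : ℝ) / 4)) →
        ∃ U ∈ Matrix.unitaryGroup (CodeIdx k (n - k)) ℂ,
          ∀ s : Fin (2 ^ k), ∀ V ∈ F,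
            ∑ t : Fin (2 ^ k),
              ‖(star U * V * U) (t, anc0 (n - k)) (s, anc0 (n - k))‖ ^ 2 ≤
              ((2 : ℝ) ^ k)⁻¹ := by
  have hγ0 : 0 < γ := pos_of_mul_pos_left (zero_lt_two.trans hγ) (by linarith)
  obtain ⟨k₀, h⟩ := tamper_detection_unitary_general α γ (by nlinarith) (by nlinarith)
  exact ⟨k₀, fun k hk n hn F hF =>
    h k hk n hn F fun V hV => norm_le_one_of_mem_unitaryGroup (hF V hV)⟩

end
end

section
/- (Higher moment bound, diagonal case.) There is an absolute constant C > 0 with the following property: for all integers n ≥ 1, all dimensions d with d > √6·(2n)^{7/4}, every φ ∈ (0,1], every CPTP map Φ on M_d(ℂ) given with a Kraus representation of r operators and satisfying F_e(Φ) ≤ φ², and every s ∈ {1,…,d}, ∫_{U(d)} (X_{ss}(U))^n dμ(U) ≤ (1 + C·n²/d) · ( √r·(φ²·d + 2n)/(φ·d) )^{2n}. -/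
open MeasureTheory Matrix

noncomputable section

instance matrixMeasurableSpace {m n α : Type*} [MeasurableSpace α] :
    MeasurableSpace (Matrix m n α) :=
  inferInstanceAs (MeasurableSpace (m → n → α))

/-- `X_{st}(U) = ∑_i |⟨e_t, U* K_i U e_s⟩|²`. -/
def Xst {d r : ℕ} (K : Fin r → Matrix (Fin d) (Fin d) ℂ) (s t : Fin d)
    (U : Matrix.unitaryGroup (Fin d) ℂ) : ℝ :=
  ∑ i, ‖(star (U : Matrix (Fin d) (Fin d) ℂ) * K i * (U : Matrix (Fin d) (Fin d) ℂ)) t s‖ ^ 2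

/-!
For fixed `s`, write `q(M) = (U* M U)_{ss}`, a linear functional of `M` depending on the random
unitary `U`, so that `X_{ss} = ∑ᵢ |q(Kᵢ)|²`. Left invariance of `μ` says that the derivative of a
polynomial in such forms along `U ↦ exp(t H) U` integrates to zero, and this derivative is the
derivation extending `q(M) ↦ q([M, H])`. Applied to `q(E_ba B) ∏_{j ∈ S} q(A_j)` along `H = E_ab`
and summed over all matrix units, this gives the recursion

  `(d + |S|) 𝔼[q(B) ∏_{j ∈ S} q(A_j)] = Tr B · 𝔼[∏_{j ∈ S} q(A_j)]`
  `  + ∑_{k ∈ S} 𝔼[q(A_k B) ∏_{j ∈ S, j ≠ k} q(A_j)]`.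

If all matrices are contractions and `|Tr B| ≤ φ d`, the first term contributes a factor `φ`. Each
of the other terms merges `B` into another factor, which may destroy one more small trace; that
costs at most `1 / φ`. Inductively, every factor of small trace is worth `φ + m / (φ d)`, where `m`
bounds the number of factors. The moment `𝔼[X_{ss}ⁿ]` is a sum of `rⁿ` expectations of products of
`2n` such factors.
-/

section CStarRing

lemma norm_le_one_of_mem_unitary {A : Type*} [NormedRing A] [StarRing A] [CStarRing A] {u : A}
    (hu : u ∈ unitary A) : ‖u‖ ≤ 1 := by
  nontriviality A
  exact (CStarRing.norm_of_mem_unitary hu).le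

lemma norm_le_one_of_sum_star_mul_self_le_one {A ι : Type*} [CStarAlgebra A] [PartialOrder A]
    [StarOrderedRing A] [Fintype ι] {a : ι → A} (ha : ∑ i, star (a i) * a i ≤ 1) (i : ι) :
    ‖a i‖ ≤ 1 := by
  have hle : star (a i) * a i ≤ 1 := (Finset.single_le_sum
    (f := fun j => star (a j) * a j) (fun j _ => star_mul_self_nonneg (a j))
    (Finset.mem_univ i)).trans ha
  have hnorm := (CStarAlgebra.norm_le_one_iff_of_nonneg _).mpr hle
  rwa [CStarRing.norm_star_mul_self, ← sq, sq_le_one_iff₀ (norm_nonneg _)] at hnorm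

lemma hasDerivAt_star_expUnitary_mul_mul {A : Type*} [NormedRing A] [NormedAlgebra ℂ A]
    [StarRing A] [ContinuousStar A] [CompleteSpace A] [StarModule ℂ A] (a : selfAdjoint A) (x : A)
    (t : ℝ) :
    HasDerivAt (fun t : ℝ =>
        star (selfAdjoint.expUnitary (t • a) : A) * x * selfAdjoint.expUnitary (t • a))
      (star (selfAdjoint.expUnitary (t • a) : A) * ⁅x, Complex.I • (a : A)⁆ *
        selfAdjoint.expUnitary (t • a)) t := by
  have hexp : HasDerivAt (fun t : ℝ => (selfAdjoint.expUnitary (t • a) : A))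
      (Complex.I • (a : A) * selfAdjoint.expUnitary (t • a)) t := by
    simpa [smul_comm _ Complex.I] using
      hasDerivAt_exp_smul_const' (𝕂 := ℝ) (Complex.I • (a : A)) t
  have hskew : star (Complex.I • (a : A)) = -(Complex.I • (a : A)) := by
    simp [a.2.star_eq]
  refine ((hexp.star.mul_const x).mul hexp).congr_deriv ?_
  rw [star_mul, hskew, Ring.lie_def]
  noncomm_ring

end CStarRing

section CompactSpace

variable {X E : Type*} [TopologicalSpace X] [CompactSpace X] [MeasurableSpace X]
  [NormedAddCommGroup E]

lemma integrable_of_continuous [OpensMeasurableSpace X] {μ : Measure X}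
    [IsFiniteMeasureOnCompacts μ] {f : X → E} (hf : Continuous f) : Integrable f μ :=
  hf.integrable_of_hasCompactSupport (.of_compactSpace f)

lemma integral_eq_zero_of_hasDerivAt_mul_left [Group X] [ContinuousMul X] [BorelSpace X]
    [NormedSpace ℝ E] {μ : Measure X} [IsFiniteMeasure μ] [μ.IsMulLeftInvariant] {f f' : X → E}
    (hf : Continuous f) (hf' : Continuous f') (g : ℝ → X)
    (hderiv : ∀ t x, HasDerivAt (fun t => f (g t * x)) (f' (g t * x)) t) :
    ∫ x, f' x ∂μ = 0 := by
  obtain ⟨C, hC⟩ := (isCompact_range hf').isBounded.exists_norm_le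
  have hintegral : HasDerivAt (fun t => ∫ x, f (g t * x) ∂μ) (∫ x, f' (g 0 * x) ∂μ) 0 :=
    (hasDerivAt_integral_of_dominated_loc_of_deriv_le (𝕜 := ℝ) (bound := fun _ => C)
      Filter.univ_mem
      (.of_forall fun t => (integrable_of_continuous (by fun_prop)).aestronglyMeasurable)
      (integrable_of_continuous (by fun_prop))
      (integrable_of_continuous (by fun_prop)).aestronglyMeasurable
      (ae_of_all _ fun x t _ => hC _ (Set.mem_range_self _))
      (integrable_const C) (ae_of_all _ fun x t _ => hderiv t x)).2
  simp only [integral_mul_left_eq_self] at hintegral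
  exact hintegral.unique (hasDerivAt_const 0 _)

end CompactSpace

section MatrixUnits

variable {l m n o R : Type*} [Fintype m] [Fintype n] [DecidableEq m] [DecidableEq n]

lemma mul_single_mul_apply [NonAssocSemiring R] (X : Matrix l m R) (Y : Matrix n o R)
    (a : m) (b : n) (i : l) (j : o) :
    (X * single a b (1 : R) * Y) i j = X i a * Y b j := by
  simp [Matrix.mul_apply, single_apply, ite_and]

lemma sum_lie_single_mul_single [CommRing R] (B : Matrix n n R) :
    ∑ a, ∑ b, ⁅single b a 1 * B, single a b (1 : R)⁆ =
      B.trace • (1 : Matrix n n R) - Fintype.card n • B := by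
  have hleft : ∑ a, ∑ b, single b a 1 * B * single a b (1 : R) =
      B.trace • (1 : Matrix n n R) := by
    simp_rw [single_mul_mul_single, one_mul, mul_one, sum_single_eq_diagonal, trace,
      Finset.sum_smul, smul_one_eq_diagonal, diag_apply]
  have hright : ∑ a, ∑ b, single a b (1 : R) * (single b a 1 * B) = Fintype.card n • B := by
    simp_rw [← mul_assoc, single_mul_single_same, one_mul, Finset.sum_const, ← Finset.smul_sum,
      ← Finset.sum_mul, sum_single_eq_diagonal, Finset.card_univ, diagonal_one, one_mul]
  simp_rw [Ring.lie_def, Finset.sum_sub_distrib, hleft, hright]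

end MatrixUnits

section UnitaryGroup

open scoped Matrix.Norms.L2Operator

variable {m n : Type*} [Fintype m] [Fintype n] [DecidableEq n]

instance matrixBorelSpace {m n α : Type*} [Countable m] [Countable n] [TopologicalSpace α]
    [SecondCountableTopology α] [MeasurableSpace α] [BorelSpace α] : BorelSpace (Matrix m n α) :=
  inferInstanceAs (BorelSpace (m → n → α))

instance unitaryGroupCompactSpace : CompactSpace (unitaryGroup n ℂ) :=
  isCompact_iff_compactSpace.mp <| Metric.isCompact_of_isClosed_isBounded isClosed_unitary <|
    isBounded_iff_forall_norm_le.mpr ⟨1, fun _ => norm_le_one_of_mem_unitary⟩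

lemma norm_entry_le_l2_opNorm (M : Matrix m n ℂ) (i : m) (j : n) : ‖M i j‖ ≤ ‖M‖ := by
  have h := l2_opNorm_mulVec M (EuclideanSpace.single j 1)
  rw [PiLp.norm_single, norm_one, mul_one] at h
  simpa using (PiLp.norm_apply_le _ i).trans h

open scoped MatrixOrder ComplexOrder in
lemma l2_opNorm_le_one_of_sum_conjTranspose_mul_self_eq_one {ι : Type*} [Fintype ι]
    {K : ι → Matrix n n ℂ} (hK : ∑ i, (K i)ᴴ * K i = 1) (i : ι) : ‖K i‖ ≤ 1 :=
  norm_le_one_of_sum_star_mul_self_le_one hK.le i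

variable (s : n) (U : unitaryGroup n ℂ)

/-- The quadratic form `M ↦ ⟨x, M x⟩` at the `s`-th column `x` of `U`, as a linear functional of
the matrix `M`. -/
def columnForm : Matrix n n ℂ →ₗ[ℂ] ℂ where
  toFun M := (star U.1 * M * U.1) s s
  map_add' M N := by simp [Matrix.mul_add, Matrix.add_mul]
  map_smul' c M := by simp

lemma columnForm_apply (M : Matrix n n ℂ) :
    columnForm s U M = (star U.1 * M * U.1) s s := rfl

@[fun_prop]
lemma continuous_columnForm (M : Matrix n n ℂ) : Continuous fun U => columnForm s U M := by
  simp only [columnForm_apply]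
  fun_prop

lemma columnForm_one : columnForm s U 1 = 1 := by
  simp [columnForm_apply]

lemma columnForm_conjTranspose (M : Matrix n n ℂ) :
    columnForm s U Mᴴ = star (columnForm s U M) := by
  have hconj : star U.1 * Mᴴ * U.1 = (star U.1 * M * U.1)ᴴ := by
    simp [star_eq_conjTranspose, mul_assoc]
  rw [columnForm_apply, hconj, conjTranspose_apply, columnForm_apply]

lemma norm_columnForm_le (M : Matrix n n ℂ) : ‖columnForm s U M‖ ≤ ‖M‖ :=
  calc ‖(star U.1 * M * U.1) s s‖ ≤ ‖star U.1 * M * U.1‖ := norm_entry_le_l2_opNorm _ s s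
    _ = ‖M‖ := by
      rw [CStarRing.norm_mul_mem_unitary _ U.2,
        CStarRing.norm_mem_unitary_mul _ (Unitary.star_mem U.2)]

lemma columnForm_mul_left (V : unitaryGroup n ℂ) (M : Matrix n n ℂ) :
    columnForm s (V * U) M = columnForm s U (star V.1 * M * V.1) := by
  simp [columnForm_apply, mul_assoc]

lemma hasDerivAt_columnForm_expUnitary_mul (a : selfAdjoint (Matrix n n ℂ)) (M : Matrix n n ℂ)
    (t : ℝ) :
    HasDerivAt (fun t : ℝ => columnForm s (selfAdjoint.expUnitary (t • a) * U) M)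
      (columnForm s (selfAdjoint.expUnitary (t • a) * U) ⁅M, Complex.I • a.1⁆) t := by
  simp only [columnForm_mul_left]
  exact ((columnForm s U).restrictScalars ℝ).toContinuousLinearMap.hasFDerivAt.comp_hasDerivAt t
    (hasDerivAt_star_expUnitary_mul_mul a M t)

/-- The orthogonal projection `x x*` onto the line spanned by the `s`-th column `x` of `U`. -/
def columnProj : Matrix n n ℂ :=
  U.1 * single s s 1 * star U.1

lemma columnForm_mul_columnProj (M : Matrix n n ℂ) :
    columnForm s U (M * columnProj s U) = columnForm s U M := by
  have hconj : star U.1 * (M * columnProj s U) * U.1 = star U.1 * M * U.1 * single s s 1 := by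
    simp [columnProj, mul_assoc]
  rw [columnForm_apply, hconj, mul_single_apply_same, mul_one, columnForm_apply]

lemma columnForm_mul_columnProj_mul (M N : Matrix n n ℂ) :
    columnForm s U (M * columnProj s U * N) = columnForm s U M * columnForm s U N := by
  have hconj : star U.1 * (M * columnProj s U * N) * U.1 =
      star U.1 * M * U.1 * single s s 1 * (star U.1 * N * U.1) := by
    simp only [columnProj, mul_assoc]
  rw [columnForm_apply, hconj, mul_single_mul_apply, columnForm_apply, columnForm_apply]

lemma columnForm_lie_mul_columnProj (A B : Matrix n n ℂ) :
    columnForm s U ⁅A, B * columnProj s U⁆ =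
      columnForm s U (A * B) - columnForm s U B * columnForm s U A := by
  rw [Ring.lie_def, map_sub, ← mul_assoc, columnForm_mul_columnProj,
    columnForm_mul_columnProj_mul]

lemma sum_columnForm_single_mul_smul_single (B : Matrix n n ℂ) :
    ∑ a, ∑ b, columnForm s U (single b a 1 * B) • single a b 1 = B * columnProj s U := by
  have hentry (a b : n) : columnForm s U (single b a 1 * B) = (B * columnProj s U) a b := by
    rw [columnForm_apply, columnProj, ← mul_assoc (star U.1), mul_assoc _ B, mul_single_mul_apply,
      ← mul_assoc B, ← mul_assoc B, mul_single_mul_apply, mul_comm]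
  simp_rw [hentry, smul_single, smul_eq_mul, mul_one, ← matrix_eq_sum_single]

variable {ι : Type*} {μ : Measure (unitaryGroup n ℂ)}

section IntegrationByParts

variable [DecidableEq ι] (S : Finset ι) (A : ι → Matrix n n ℂ)

/-- The derivative of `U ↦ ∏ j ∈ S, columnForm s U (A j)` along `U ↦ exp (t H) U`, extended to a
complex linear functional of `H`. -/
def prodColumnFormDeriv : Matrix n n ℂ →ₗ[ℂ] ℂ :=
  ∑ k ∈ S, (∏ j ∈ S.erase k, columnForm s U (A j)) •
    (columnForm s U ∘ₗ (LinearMap.mulLeft ℂ (A k) - LinearMap.mulRight ℂ (A k)))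

lemma prodColumnFormDeriv_apply (H : Matrix n n ℂ) :
    prodColumnFormDeriv s U S A H =
      ∑ k ∈ S, (∏ j ∈ S.erase k, columnForm s U (A j)) * columnForm s U ⁅A k, H⁆ := by
  simp [prodColumnFormDeriv, Ring.lie_def]

@[fun_prop]
lemma continuous_prodColumnFormDeriv (H : Matrix n n ℂ) :
    Continuous fun U => prodColumnFormDeriv s U S A H := by
  simp only [prodColumnFormDeriv_apply]
  fun_prop

lemma prodColumnFormDeriv_mul_columnProj (B : Matrix n n ℂ) :
    prodColumnFormDeriv s U S A (B * columnProj s U) =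
      ∑ k ∈ S, (∏ j ∈ S.erase k, columnForm s U (A j)) * columnForm s U (A k * B) -
        S.card * (columnForm s U B * ∏ j ∈ S, columnForm s U (A j)) := by
  have hfull : ∀ k ∈ S, (∏ j ∈ S.erase k, columnForm s U (A j)) *
      (columnForm s U B * columnForm s U (A k)) =
        columnForm s U B * ∏ j ∈ S, columnForm s U (A j) := fun k hk => by
    rw [mul_left_comm, Finset.prod_erase_mul _ _ hk]
  simp_rw [prodColumnFormDeriv_apply, columnForm_lie_mul_columnProj, mul_sub,
    Finset.sum_sub_distrib]
  rw [Finset.sum_congr rfl hfull, Finset.sum_const, nsmul_eq_mul]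

lemma sum_columnForm_lie_single_mul_prod_add (B : Matrix n n ℂ) :
    ∑ a, ∑ b, (columnForm s U ⁅single b a 1 * B, single a b 1⁆ * ∏ j ∈ S, columnForm s U (A j) +
      columnForm s U (single b a 1 * B) * prodColumnFormDeriv s U S A (single a b 1)) =
    B.trace * ∏ j ∈ S, columnForm s U (A j) +
      ∑ k ∈ S, (∏ j ∈ S.erase k, columnForm s U (A j)) * columnForm s U (A k * B) -
      (Fintype.card n + S.card) * (columnForm s U B * ∏ j ∈ S, columnForm s U (A j)) := by
  have hlie : ∑ a, ∑ b, columnForm s U ⁅single b a 1 * B, single a b 1⁆ =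
      B.trace - Fintype.card n * columnForm s U B := by
    simp_rw [← map_sum, sum_lie_single_mul_single, map_sub, map_smul, map_nsmul, columnForm_one,
      nsmul_eq_mul, smul_eq_mul, mul_one]
  have hderiv : ∑ a, ∑ b, columnForm s U (single b a 1 * B) *
      prodColumnFormDeriv s U S A (single a b 1) =
        prodColumnFormDeriv s U S A (B * columnProj s U) := by
    simp_rw [← sum_columnForm_single_mul_smul_single, map_sum, map_smul, smul_eq_mul]
  simp_rw [Finset.sum_add_distrib, ← Finset.sum_mul, hlie, hderiv,
    prodColumnFormDeriv_mul_columnProj]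
  ring

variable [IsFiniteMeasure μ] [μ.IsMulLeftInvariant]

lemma integral_columnForm_lie_I_smul_mul_prod_add (N : Matrix n n ℂ)
    (a : selfAdjoint (Matrix n n ℂ)) :
    ∫ U, (columnForm s U ⁅N, Complex.I • a.1⁆ * ∏ j ∈ S, columnForm s U (A j) +
      columnForm s U N * prodColumnFormDeriv s U S A (Complex.I • a.1)) ∂μ = 0 := by
  refine integral_eq_zero_of_hasDerivAt_mul_left
    (f := fun U => columnForm s U N * ∏ j ∈ S, columnForm s U (A j)) (by fun_prop) (by fun_prop)
    (fun t => selfAdjoint.expUnitary (t • a)) fun t U => ?_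
  simp only [prodColumnFormDeriv_apply, ← smul_eq_mul (∏ _j ∈ S.erase _, _)]
  exact (hasDerivAt_columnForm_expUnitary_mul s U a N t).mul
    (HasDerivAt.fun_finsetProd fun j _ => hasDerivAt_columnForm_expUnitary_mul s U a (A j) t)

lemma integral_columnForm_lie_mul_prod_add (N H : Matrix n n ℂ) :
    ∫ U, (columnForm s U ⁅N, H⁆ * ∏ j ∈ S, columnForm s U (A j) +
      columnForm s U N * prodColumnFormDeriv s U S A H) ∂μ = 0 := by
  have hH : H = (-Complex.I) • (Complex.I • (realPart H).1) + Complex.I • (imaginaryPart H).1 := by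
    conv_lhs => rw [← realPart_add_I_smul_imaginaryPart H]
    simp [smul_smul]
  have hlin (U : unitaryGroup n ℂ) (c : ℂ) (X Y : Matrix n n ℂ) :
      columnForm s U ⁅N, c • X + Y⁆ * ∏ j ∈ S, columnForm s U (A j) +
          columnForm s U N * prodColumnFormDeriv s U S A (c • X + Y) =
        c * (columnForm s U ⁅N, X⁆ * ∏ j ∈ S, columnForm s U (A j) +
            columnForm s U N * prodColumnFormDeriv s U S A X) +
          (columnForm s U ⁅N, Y⁆ * ∏ j ∈ S, columnForm s U (A j) +
            columnForm s U N * prodColumnFormDeriv s U S A Y) := by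
    simp only [Ring.lie_def, mul_add, add_mul, mul_smul_comm, smul_mul_assoc, map_add, map_sub,
      map_smul, smul_eq_mul]
    ring
  rw [hH]
  simp only [hlin]
  rw [integral_add (integrable_of_continuous (by fun_prop))
      (integrable_of_continuous (by fun_prop)), integral_const_mul,
    integral_columnForm_lie_I_smul_mul_prod_add, integral_columnForm_lie_I_smul_mul_prod_add,
    mul_zero, add_zero]

theorem card_add_card_mul_integral_columnForm_mul_prod (B : Matrix n n ℂ) :
    (Fintype.card n + S.card) * ∫ U, columnForm s U B * ∏ j ∈ S, columnForm s U (A j) ∂μ =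
      B.trace * ∫ U, ∏ j ∈ S, columnForm s U (A j) ∂μ +
        ∑ k ∈ S, ∫ U, (∏ j ∈ S.erase k, columnForm s U (A j)) * columnForm s U (A k * B) ∂μ := by
  rw [eq_comm, ← sub_eq_zero, ← integral_const_mul, ← integral_const_mul,
    ← integral_finsetSum _ fun k _ => integrable_of_continuous (by fun_prop),
    ← integral_add (integrable_of_continuous (by fun_prop))
      (integrable_of_continuous (by fun_prop)),
    ← integral_sub (integrable_of_continuous (by fun_prop))
      (integrable_of_continuous (by fun_prop))]
  simp_rw [← sum_columnForm_lie_single_mul_prod_add]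
  rw [integral_finsetSum _ fun a _ => integrable_of_continuous (by fun_prop)]
  refine Finset.sum_eq_zero fun a _ => ?_
  rw [integral_finsetSum _ fun b _ => integrable_of_continuous (by fun_prop)]
  exact Finset.sum_eq_zero fun b _ => integral_columnForm_lie_mul_prod_add ..

variable {S}

lemma card_mul_norm_integral_prod_columnForm_le {i : ι} (hi : i ∈ S) :
    Fintype.card n * ‖∫ U, ∏ j ∈ S, columnForm s U (A j) ∂μ‖ ≤
      ‖(A i).trace‖ * ‖∫ U, ∏ j ∈ S.erase i, columnForm s U (A j) ∂μ‖ +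
        ∑ k ∈ S.erase i, ‖∫ U, ∏ j ∈ S.erase i,
          columnForm s U (Function.update A k (A k * A i) j) ∂μ‖ := by
  have hprod (U : unitaryGroup n ℂ) :
      columnForm s U (A i) * ∏ j ∈ S.erase i, columnForm s U (A j) =
        ∏ j ∈ S, columnForm s U (A j) :=
    Finset.mul_prod_erase S (fun j => columnForm s U (A j)) hi
  have hupdate : ∀ k ∈ S.erase i,
      ∫ U, (∏ j ∈ (S.erase i).erase k, columnForm s U (A j)) * columnForm s U (A k * A i) ∂μ =
        ∫ U, ∏ j ∈ S.erase i, columnForm s U (Function.update A k (A k * A i) j) ∂μ :=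
    fun k hk => by
      congr 1 with U
      rw [Finset.prod_congr rfl fun j _ =>
          Function.apply_update (fun _ => columnForm s U) A k (A k * A i) j,
        Finset.prod_update_of_mem hk, Finset.sdiff_singleton_eq_erase, mul_comm]
  have hrec := card_add_card_mul_integral_columnForm_mul_prod (μ := μ) s (S.erase i) A (A i)
  rw [Finset.sum_congr rfl hupdate] at hrec
  simp_rw [hprod] at hrec
  calc Fintype.card n * ‖∫ U, ∏ j ∈ S, columnForm s U (A j) ∂μ‖
      ≤ ‖(Fintype.card n + (S.erase i).card) * ∫ U, ∏ j ∈ S, columnForm s U (A j) ∂μ‖ := by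
        rw [norm_mul]
        gcongr
        norm_cast
        exact Nat.le_add_right _ _
    _ ≤ _ := by
        rw [hrec]
        grw [norm_add_le, norm_mul, norm_sum_le]

variable {A}

lemma norm_integral_prod_columnForm_le_mul {φ m b : ℝ} (hφ : 0 < φ) {i : ι} (hi : i ∈ S)
    (hm : S.card ≤ m) (htr : ‖(A i).trace‖ ≤ φ * Fintype.card n)
    (hrest : ‖∫ U, ∏ j ∈ S.erase i, columnForm s U (A j) ∂μ‖ ≤ b)
    (hmerge : ∀ k ∈ S.erase i, ‖∫ U, ∏ j ∈ S.erase i,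
      columnForm s U (Function.update A k (A k * A i) j) ∂μ‖ ≤ b / φ) :
    ‖∫ U, ∏ j ∈ S, columnForm s U (A j) ∂μ‖ ≤ (φ + m / (φ * Fintype.card n)) * b := by
  have hd : (0 : ℝ) < Fintype.card n := Nat.cast_pos.mpr (Fintype.card_pos_iff.mpr ⟨s⟩)
  have hb : 0 ≤ b := (norm_nonneg _).trans hrest
  have hcard : ((S.erase i).card : ℝ) ≤ m := hm.trans' (by gcongr; exact S.erase_subset i)
  refine le_of_mul_le_mul_left ?_ hd
  calc Fintype.card n * ‖∫ U, ∏ j ∈ S, columnForm s U (A j) ∂μ‖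
      ≤ _ := card_mul_norm_integral_prod_columnForm_le s A hi
    _ ≤ φ * Fintype.card n * b + (S.erase i).card • (b / φ) := by
        grw [htr, hrest, Finset.sum_le_card_nsmul _ _ _ hmerge]
    _ ≤ φ * Fintype.card n * b + m * (b / φ) := by
        rw [nsmul_eq_mul]
        gcongr
    _ = Fintype.card n * ((φ + m / (φ * Fintype.card n)) * b) := by
        field_simp

end IntegrationByParts

section Moments

variable [IsProbabilityMeasure μ]

lemma norm_integral_prod_columnForm_le_one {S : Finset ι} {A : ι → Matrix n n ℂ}
    (hA : ∀ j ∈ S, ‖A j‖ ≤ 1) : ‖∫ U, ∏ j ∈ S, columnForm s U (A j) ∂μ‖ ≤ 1 := by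
  refine (norm_integral_le_of_norm_le_const (C := 1) (ae_of_all _ fun U => ?_)).trans_eq (by simp)
  rw [norm_prod]
  exact Finset.prod_le_one (fun _ _ => norm_nonneg _) fun j hj =>
    (norm_columnForm_le s U (A j)).trans (hA j hj)

lemma pow_card_erase_le_div [DecidableEq ι] {φ β : ℝ} (hφ : 0 < φ) (hφ₁ : φ ≤ 1) (hφβ : φ ≤ β)
    (F : Finset ι) (k : ι) : β ^ (F.erase k).card ≤ β ^ F.card / φ := by
  have hβ : 0 < β := hφ.trans_le hφβ
  rw [le_div_iff₀ hφ]
  by_cases hk : k ∈ F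
  · rw [← Finset.card_erase_add_one hk, pow_succ]
    gcongr
  · rw [Finset.erase_eq_of_notMem hk]
    exact mul_le_of_le_one_right (by positivity) hφ₁

variable [μ.IsMulLeftInvariant]

theorem norm_integral_prod_columnForm_le {φ m : ℝ} (hφ : 0 < φ) {F S : Finset ι}
    {A : ι → Matrix n n ℂ} (hFS : F ⊆ S) (hm : S.card ≤ m) (hA : ∀ j ∈ S, ‖A j‖ ≤ 1)
    (htr : ∀ j ∈ F, ‖(A j).trace‖ ≤ φ * Fintype.card n) :
    ‖∫ U, ∏ j ∈ S, columnForm s U (A j) ∂μ‖ ≤ (φ + m / (φ * Fintype.card n)) ^ F.card := by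
  classical
  have hm₀ : 0 ≤ m := (Nat.cast_nonneg _).trans hm
  have hφβ : φ ≤ φ + m / (φ * Fintype.card n) := le_add_of_nonneg_right (by positivity)
  obtain hφ₁ | hφ₁ := le_total 1 φ
  · exact (norm_integral_prod_columnForm_le_one s hA).trans (one_le_pow₀ (hφ₁.trans hφβ))
  induction F using Finset.strongInduction generalizing S A with
  | H F ih =>
  obtain rfl | ⟨i, hi⟩ := F.eq_empty_or_nonempty
  · simpa using norm_integral_prod_columnForm_le_one s hA
  have hFSi : F.erase i ⊆ S.erase i := Finset.erase_subset_erase i hFS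
  have hmi : ((S.erase i).card : ℝ) ≤ m := hm.trans' (by gcongr; exact S.erase_subset i)
  have hAi : ∀ j ∈ S.erase i, ‖A j‖ ≤ 1 := fun j hj => hA j (Finset.mem_of_mem_erase hj)
  have htri : ∀ j ∈ F.erase i, ‖(A j).trace‖ ≤ φ * Fintype.card n :=
    fun j hj => htr j (Finset.mem_of_mem_erase hj)
  rw [← Finset.card_erase_add_one hi, pow_succ']
  refine norm_integral_prod_columnForm_le_mul s hφ (hFS hi) hm (htr i hi)
    (ih _ (Finset.erase_ssubset hi) hFSi hmi hAi htri) fun k hk => ?_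
  have hnorm : ∀ j ∈ S.erase i, ‖Function.update A k (A k * A i) j‖ ≤ 1 := by
    rw [Function.forall_update_iff A fun j X => j ∈ S.erase i → ‖X‖ ≤ 1]
    exact ⟨fun _ => (norm_mul_le _ _).trans
      (mul_le_one₀ (hAi k hk) (norm_nonneg _) (hA i (hFS hi))), fun j _ => hAi j⟩
  have htrace : ∀ j ∈ (F.erase i).erase k,
      ‖(Function.update A k (A k * A i) j).trace‖ ≤ φ * Fintype.card n := fun j hj => by
    rw [Function.update_of_ne (Finset.ne_of_mem_erase hj)]
    exact htri j (Finset.mem_of_mem_erase hj)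
  exact (ih _ ((Finset.erase_subset k _).trans_ssubset (Finset.erase_ssubset hi))
    ((Finset.erase_subset k _).trans hFSi) hmi hnorm htrace).trans
      (pow_card_erase_le_div hφ hφ₁ hφβ _ k)

theorem integral_prod_norm_sq_columnForm_le [Fintype ι] {φ : ℝ} (hφ : 0 < φ)
    {K : ι → Matrix n n ℂ} (hK : ∀ i, ‖K i‖ ≤ 1)
    (htr : ∀ i, ‖(K i).trace‖ ≤ φ * Fintype.card n) :
    ∫ U, ∏ i, ‖columnForm s U (K i)‖ ^ 2 ∂μ ≤
      (φ + 2 * Fintype.card ι / (φ * Fintype.card n)) ^ (2 * Fintype.card ι) := by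
  let A : ι ⊕ ι → Matrix n n ℂ := Sum.elim K fun i => (K i)ᴴ
  have hA (U : unitaryGroup n ℂ) :
      ∏ j, columnForm s U (A j) = ((∏ i, ‖columnForm s U (K i)‖ ^ 2 : ℝ) : ℂ) := by
    simp [A, Fintype.prod_sum_type, columnForm_conjTranspose, ← Finset.prod_mul_distrib,
      Complex.mul_conj']
  have hbound := norm_integral_prod_columnForm_le (μ := μ) s (m := 2 * Fintype.card ι) hφ
    (F := Finset.univ) (S := Finset.univ) (A := A) subset_rfl (by simp [two_mul])
    (by simp [A, hK, l2_opNorm_conjTranspose]) (by simp [A, htr, trace_conjTranspose])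
  simp only [hA, integral_complex_ofReal, Complex.norm_real, Finset.card_univ, Fintype.card_sum,
    ← two_mul] at hbound
  exact (le_abs_self _).trans hbound

end Moments

theorem higher_moment_bound_diag_general {d r : ℕ} {φ : ℝ} (hφ : 0 < φ)
    {μ : Measure (unitaryGroup (Fin d) ℂ)} [IsProbabilityMeasure μ] [μ.IsMulLeftInvariant]
    {K : Fin r → Matrix (Fin d) (Fin d) ℂ} (hK : ∀ i, ‖K i‖ ≤ 1)
    (htr : ∀ i, ‖(K i).trace‖ ≤ φ * d) (n : ℕ) (s : Fin d) :
    ∫ U, Xst K s s U ^ n ∂μ ≤ (√r * (φ ^ 2 * d + 2 * n) / (φ * d)) ^ (2 * n) := by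
  have hd : (0 : ℝ) < d := Nat.cast_pos.mpr s.pos
  have hexpand (U : unitaryGroup (Fin d) ℂ) :
      Xst K s s U ^ n = ∑ p : Fin n → Fin r, ∏ j, ‖columnForm s U (K (p j))‖ ^ 2 :=
    Fintype.sum_pow _ n
  calc ∫ U, Xst K s s U ^ n ∂μ
      = ∑ p : Fin n → Fin r, ∫ U, ∏ j, ‖columnForm s U (K (p j))‖ ^ 2 ∂μ := by
        simp_rw [hexpand]
        exact integral_finsetSum _ fun p _ => integrable_of_continuous (by fun_prop)
    _ ≤ ∑ _p : Fin n → Fin r, (φ + 2 * n / (φ * d)) ^ (2 * n) := by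
        gcongr with p
        simpa using integral_prod_norm_sq_columnForm_le (μ := μ) s hφ (fun j => hK (p j))
          fun j => by simpa using htr (p j)
    _ = (√r * (φ + 2 * n / (φ * d))) ^ (2 * n) := by
        rw [mul_pow, pow_mul √r, Real.sq_sqrt r.cast_nonneg]
        simp
    _ = (√r * (φ ^ 2 * d + 2 * n) / (φ * d)) ^ (2 * n) := by
        congr 1
        field_simp

end UnitaryGroup

/-- Higher moment bound, diagonal case. -/
theorem higher_moment_bound_diag :
    ∃ C : ℝ, 0 < C ∧
      ∀ (n d r : ℕ), 1 ≤ n →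
        Real.sqrt 6 * ((2 * n : ℕ) : ℝ) ^ ((7 : ℝ) / 4) < (d : ℝ) →
        ∀ φ : ℝ, 0 < φ → φ ≤ 1 →
          ∀ (μ : Measure (Matrix.unitaryGroup (Fin d) ℂ)),
            IsProbabilityMeasure μ → μ.IsMulLeftInvariant →
            ∀ (K : Fin r → Matrix (Fin d) (Fin d) ℂ),
              (∑ i, (K i)ᴴ * K i = 1) →
              ((∑ i, ‖(K i).trace‖ ^ 2) / (d : ℝ) ^ 2 ≤ φ ^ 2) →
              ∀ s : Fin d,
                ∫ U, (Xst K s s U) ^ n ∂μ ≤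
                  (1 + C * (n : ℝ) ^ 2 / d) *
                    (Real.sqrt r * (φ ^ 2 * d + 2 * n) / (φ * d)) ^ (2 * n) := by
  refine ⟨1, one_pos, fun n d r _ _ φ hφ _ μ _ _ K hK hF s => ?_⟩
  have hd : (0 : ℝ) < d := Nat.cast_pos.mpr s.pos
  have htr (i : Fin r) : ‖(K i).trace‖ ≤ φ * d := by
    rw [div_le_iff₀ (by positivity), ← mul_pow] at hF
    exact le_of_sq_le_sq ((Finset.single_le_sum (f := fun i => ‖(K i).trace‖ ^ 2)
      (fun j _ => by positivity) (Finset.mem_univ i)).trans hF) (by positivity)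
  have hbound := higher_moment_bound_diag_general hφ (μ := μ)
    (l2_opNorm_le_one_of_sum_conjTranspose_mul_self_eq_one hK) htr n s
  exact hbound.trans (le_mul_of_one_le_left (by positivity)
    (le_add_of_nonneg_right (by positivity)))

end
end
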